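/- arXiv:2108.06840 — 2 statements merged into one kernel-verified Lean document; each statement's English description precedes it below -/
import Mathlib

section
/- Let d ≥ 1 be an integer and 1 < p < q < d, R ∈ (0,∞). Set μ = q/p and q' = pq/(q−p). Then for any p' ∈ [1, q'] there is a constant N = N(d,p,q) such that for every function u that is continuously differentiable on B̄_R: ‖u‖_{E_{p',μ−1}(B_R)} ≤ N ‖Du‖_{E_{p,μ}(B_R)} + N R^{−1} ‖u‖_{E_{p,μ}(B_R)}. -/
open MeasureTheory Metric Set Filter
open scoped ENNReal RealInnerProductSpace

noncomputable section

/-- Euclidean space `ℝ^d`. -/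
abbrev E (d : ℕ) : Type := EuclideanSpace ℝ (Fin d)

/-- Frobenius norm of a `d × d` matrix. -/
def frob {d : ℕ} (m : Matrix (Fin d) (Fin d) ℝ) : ℝ :=
  Real.sqrt (∑ i, ∑ j, (m i j) ^ 2)

/-- `F` is `δ`-elliptic: `δ tr w ≤ F (m + w) - F m ≤ δ⁻¹ tr w` for symmetric `m` and
symmetric positive semidefinite `w`. -/
def Elliptic {d : ℕ} (δ : ℝ) (F : Matrix (Fin d) (Fin d) ℝ → ℝ) : Prop :=
  ∀ m : Matrix (Fin d) (Fin d) ℝ, m.IsSymm →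
    ∀ w : Matrix (Fin d) (Fin d) ℝ, w.PosSemidef →
      δ * w.trace ≤ F (m + w) - F m ∧ F (m + w) - F m ≤ δ⁻¹ * w.trace

/-- Gradient of `u : ℝ^d → ℝ` as a vector in `ℝ^d`. -/
def grad {d : ℕ} (u : E d → ℝ) (x : E d) : E d :=
  (EuclideanSpace.equiv (Fin d) ℝ).symm fun i => fderiv ℝ u x (EuclideanSpace.single i 1)

/-- Hessian matrix of `u : ℝ^d → ℝ`. -/
def hess {d : ℕ} (u : E d → ℝ) (x : E d) : Matrix (Fin d) (Fin d) ℝ :=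
  Matrix.of fun i j =>
    fderiv ℝ (fun y => fderiv ℝ u y (EuclideanSpace.single j 1)) x (EuclideanSpace.single i 1)

/-- Normalized `L_p` norm `(⨍_B |g|^p)^{1/p}` (average over `B`). -/
def nLp {d : ℕ} (p : ℝ) (B : Set (E d)) (g : E d → ℝ) : ℝ≥0∞ :=
  ((volume B)⁻¹ * ∫⁻ y in B, ENNReal.ofReal (|g y| ^ p)) ^ (1 / p)

/-- Unnormalized `L_p` norm `(∫_A |g|^p)^{1/p}`. -/
def Lpn {d : ℕ} (p : ℝ) (A : Set (E d)) (g : E d → ℝ) : ℝ≥0∞ :=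
  (∫⁻ y in A, ENNReal.ofReal (|g y| ^ p)) ^ (1 / p)

/-- Morrey norm `‖g‖_{E_{p,μ}(Ω)} = sup_{ρ>0, x∈Ω} ρ^μ (⨍_{B_ρ(x)} |g 1_Ω|^p)^{1/p}`. -/
def morrey {d : ℕ} (p μ : ℝ) (Ω : Set (E d)) (g : E d → ℝ) : ℝ≥0∞ :=
  ⨆ (ρ : ℝ) (_ : 0 < ρ) (x : E d) (_ : x ∈ Ω),
    ENNReal.ofReal (ρ ^ μ) * nLp p (ball x ρ) (Ω.indicator g)

/-- The `(θ, R₀)`-oscillation condition on `F(m, x)`. -/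
def OscCond {d : ℕ} (δ θ R₀ : ℝ) (F : Matrix (Fin d) (Fin d) ℝ → E d → ℝ) : Prop :=
  ∀ r ∈ Set.Ioc (0 : ℝ) R₀, ∀ z : E d,
    ∃ Fb : Matrix (Fin d) (Fin d) ℝ → ℝ,
      ConvexOn ℝ Set.univ Fb ∧ Elliptic δ Fb ∧ Fb 0 = 0 ∧
      ∀ m : Matrix (Fin d) (Fin d) ℝ, m.IsSymm → frob m = 1 →
        (volume (ball z r))⁻¹ *
            ∫⁻ x in ball z r,
              ⨆ (τ : ℝ) (_ : 0 < τ), ENNReal.ofReal (τ⁻¹ * |F (τ • m) x - Fb (τ • m)|)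
          ≤ ENNReal.ofReal θ

/-- The homogeneity bound `|F(ζ m, x)| ≤ ζ |F(m, x)| + K(x)` for `ζ ∈ [0,1]`. -/
def HomBound {d : ℕ} (F : Matrix (Fin d) (Fin d) ℝ → E d → ℝ) (K : E d → ℝ) : Prop :=
  ∀ ζ ∈ Set.Icc (0 : ℝ) 1, ∀ m : Matrix (Fin d) (Fin d) ℝ, m.IsSymm → ∀ x : E d,
    |F (ζ • m) x| ≤ ζ * |F m x| + K x

/-!
Averaging the fundamental theorem of calculus along the segments from `x` to all points of the ball
bounds `u x` by the mean of `u` plus a Riesz potential of `‖fderiv ℝ u‖`, written as an integral of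
ball averages over all radii. The mean is controlled by `R⁻¹` times the Morrey norm of `u`, so the
heart of the matter is Adams' theorem for the potential.

Given a level `t`, truncate the potential at the radius `r` for which the Morrey decay of the
averages makes the part over radii beyond `r` at most `t / 2`. Where the potential exceeds `t` the
part over radii below `r` exceeds `t / 2`, and only the points where the density exceeds a multiple
of `t / r` can be responsible for half of that. Integrating the resulting bound for the superlevel
sets over all levels gives the `L^Q` estimate directly, as in the proof of Doob's inequality and
without a maximal function.
-/

section LayerCake

theorem lintegral_Ioi_rpow_of_lt {a r : ℝ} (ha : a < -1) (hr : 0 < r) :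
    ∫⁻ t in Ioi r, ENNReal.ofReal (t ^ a) = ENNReal.ofReal (-r ^ (a + 1) / (a + 1)) := by
  rw [← integral_Ioi_rpow_of_lt ha hr,
    ofReal_integral_eq_lintegral_ofReal (integrableOn_Ioi_rpow_of_lt ha hr)]
  filter_upwards [self_mem_ae_restrict measurableSet_Ioi] with t ht
  exact Real.rpow_nonneg (hr.trans ht).le _

theorem lintegral_Ioo_rpow {b r : ℝ} (hb : 0 < b) (hr : 0 ≤ r) :
    ∫⁻ t in Ioo 0 r, ENNReal.ofReal (t ^ (b - 1)) = ENNReal.ofReal (r ^ b / b) := by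
  have integrable : IntegrableOn (fun t : ℝ => t ^ (b - 1)) (Ioo 0 r) :=
    (intervalIntegrable_iff_integrableOn_Ioo_of_le hr).1
      (intervalIntegral.intervalIntegrable_rpow' (by linarith))
  rw [← ofReal_integral_eq_lintegral_ofReal integrable]
  · rw [← integral_Ioc_eq_integral_Ioo, ← intervalIntegral.integral_of_le hr,
      integral_rpow (Or.inl (by linarith))]
    simp [Real.zero_rpow hb.ne']
  · filter_upwards [self_mem_ae_restrict measurableSet_Ioo] with t ht
    exact Real.rpow_nonneg ht.1.le _

theorem lintegral_Ioi_rpow_eq_top (a : ℝ) :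
    ∫⁻ t in Ioi (0 : ℝ), ENNReal.ofReal (t ^ a) = ⊤ := by
  by_contra h
  refine not_integrableOn_Ioi_rpow a ((lintegral_ofReal_ne_top_iff_integrable ?_ ?_).1 h)
  · exact (measurable_id.pow_const a).aestronglyMeasurable
  · filter_upwards [self_mem_ae_restrict measurableSet_Ioi] with t ht
    exact Real.rpow_nonneg (le_of_lt ht) _

theorem rpow_div_eq_lintegral_Ioi_indicator {b : ℝ} (hb : 0 < b) (a : ℝ≥0∞) :
    a ^ b / ENNReal.ofReal b =
      ∫⁻ t in Ioi (0 : ℝ), {t | ENNReal.ofReal t < a}.indicator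
        (fun t => ENNReal.ofReal (t ^ (b - 1))) t := by
  rw [setLIntegral_indicator (measurableSet_lt (by fun_prop) (by fun_prop))]
  induction a with
  | top =>
    simp [hb, ENNReal.top_div, lintegral_Ioi_rpow_eq_top]
  | coe r =>
    have levels : {t | ENNReal.ofReal t < r} ∩ Ioi 0 = Ioo (0 : ℝ) r := by
      ext t
      simp only [mem_inter_iff, mem_ofPred_eq, mem_Ioi, mem_Ioo, and_comm (b := 0 < t)]
      exact and_congr_right fun ht => by
        rw [← ENNReal.ofReal_coe_nnreal, ENNReal.ofReal_lt_ofReal_iff_of_nonneg ht.le]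
    rw [levels, lintegral_Ioo_rpow hb r.coe_nonneg, ENNReal.ofReal_div_of_pos hb,
      ← ENNReal.ofReal_rpow_of_nonneg r.coe_nonneg hb.le]
    simp

theorem lintegral_mul_rpow_eq_lintegral_setLIntegral_lt {α : Type*} [MeasurableSpace α]
    (ν : Measure α) [SFinite ν] {h g : α → ℝ≥0∞} (hh : Measurable h) (hg : Measurable g)
    {b : ℝ} (hb : 0 < b) :
    ∫⁻ y, h y * g y ^ b ∂ν =
      ENNReal.ofReal b * ∫⁻ t in Ioi (0 : ℝ),
        (∫⁻ y in {y | ENNReal.ofReal t < g y}, h y ∂ν) * ENNReal.ofReal (t ^ (b - 1)) := by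
  let S : Set (ℝ × α) := {z | ENNReal.ofReal z.1 < g z.2}
  have hS : MeasurableSet S := measurableSet_lt (by fun_prop) (by fun_prop)
  let Φ : ℝ → α → ℝ≥0∞ := fun t y =>
    h y * S.indicator (fun z => ENNReal.ofReal (z.1 ^ (b - 1))) (t, y)
  have hΦ : Measurable (Function.uncurry Φ) :=
    (hh.comp measurable_snd).mul (Measurable.indicator (by fun_prop) hS)
  have fiber (t : ℝ) : (∫⁻ y in {y | ENNReal.ofReal t < g y}, h y ∂ν) *
      ENNReal.ofReal (t ^ (b - 1)) = ∫⁻ y, Φ t y ∂ν := by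
    rw [← lintegral_mul_const _ hh,
      ← lintegral_indicator (measurableSet_lt measurable_const hg)]
    refine lintegral_congr fun y => ?_
    simp only [Φ, S, indicator, mem_ofPred_eq, mul_ite, mul_zero]
  have level (y : α) :
      h y * g y ^ b = ENNReal.ofReal b * ∫⁻ t in Ioi (0 : ℝ), Φ t y := by
    rw [lintegral_const_mul _ (by fun_prop (disch := exact hS)), mul_left_comm]
    change _ = h y * (_ * ∫⁻ t in Ioi (0 : ℝ), {t | ENNReal.ofReal t < g y}.indicator
      (fun t => ENNReal.ofReal (t ^ (b - 1))) t)
    rw [← rpow_div_eq_lintegral_Ioi_indicator hb,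
      ENNReal.mul_div_cancel (by simpa using hb) ENNReal.ofReal_ne_top]
  simp_rw [fiber, level]
  rw [lintegral_const_mul _ hΦ.lintegral_prod_left,
    lintegral_lintegral_swap hΦ.aemeasurable]

theorem lintegral_rpow_eq_lintegral_setLIntegral_lt {α : Type*} [MeasurableSpace α]
    (ν : Measure α) [SFinite ν] {h : α → ℝ≥0∞} (hh : Measurable h) {p : ℝ} (hp : 1 < p) :
    ∫⁻ y, h y ^ p ∂ν =
      ENNReal.ofReal (p - 1) * ∫⁻ t in Ioi (0 : ℝ),
        (∫⁻ y in {y | ENNReal.ofReal t < h y}, h y ∂ν) * ENNReal.ofReal (t ^ (p - 1 - 1)) := by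
  have hp₁ : 0 < p - 1 := sub_pos.2 hp
  rw [← lintegral_mul_rpow_eq_lintegral_setLIntegral_lt ν hh hh hp₁]
  refine lintegral_congr fun y => ?_
  conv_rhs => rw [← ENNReal.rpow_one (h y), ← ENNReal.rpow_mul, one_mul]
  rw [← ENNReal.rpow_add_of_nonneg _ _ zero_le_one hp₁.le, add_sub_cancel]

theorem lintegral_rpow_le_of_forall_gt_mul_meas_le {α β : Type*} [MeasurableSpace α]
    [MeasurableSpace β] {ν : Measure α} [SFinite ν] {π : Measure β} [SFinite π]
    {g : α → ℝ≥0∞} {h : β → ℝ≥0∞} (hg : Measurable g) (hh : Measurable h) {p t₀ : ℝ}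
    (hp : 1 < p) (ht₀ : 0 ≤ t₀)
    (levels : ∀ t > t₀, ENNReal.ofReal t * ν {x | ENNReal.ofReal t < g x} ≤
      ∫⁻ y in {y | ENNReal.ofReal t < h y}, h y ∂π) :
    ∫⁻ x, g x ^ p ∂ν ≤ ENNReal.ofReal (t₀ ^ p) * ν univ +
      ENNReal.ofReal (p / (p - 1)) * ∫⁻ y, h y ^ p ∂π := by
  have hp₀ : 0 < p := zero_lt_one.trans hp
  have hp₁ : 0 < p - 1 := sub_pos.2 hp
  have low : ∫⁻ t in Ioc 0 t₀, ν {x | ENNReal.ofReal t < g x} * ENNReal.ofReal (t ^ (p - 1)) ≤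
      ν univ * ENNReal.ofReal (t₀ ^ p / p) := by
    rw [← lintegral_Ioo_rpow hp₀ ht₀, ← restrict_Ioo_eq_restrict_Ioc,
      ← lintegral_const_mul _ (by fun_prop)]
    gcongr
    exact subset_univ _
  have high : ∫⁻ t in Ioi t₀, ν {x | ENNReal.ofReal t < g x} * ENNReal.ofReal (t ^ (p - 1)) ≤
      (∫⁻ y, h y ^ p ∂π) / ENNReal.ofReal (p - 1) := by
    rw [lintegral_rpow_eq_lintegral_setLIntegral_lt π hh hp, mul_comm,
      ENNReal.mul_div_cancel_right (by simpa using hp) ENNReal.ofReal_ne_top]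
    refine (setLIntegral_mono' measurableSet_Ioi fun t ht => ?_).trans
      (lintegral_mono_set (Ioi_subset_Ioi ht₀))
    have shift : ENNReal.ofReal (t ^ (p - 1)) =
        ENNReal.ofReal t * ENNReal.ofReal (t ^ (p - 1 - 1)) := by
      rw [← ENNReal.ofReal_mul (ht₀.trans_lt ht).le, ← Real.rpow_one_add' (ht₀.trans_lt ht).le
        (by linarith), add_sub_cancel]
    calc ν {x | ENNReal.ofReal t < g x} * ENNReal.ofReal (t ^ (p - 1))
        = ENNReal.ofReal t * ν {x | ENNReal.ofReal t < g x} *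
            ENNReal.ofReal (t ^ (p - 1 - 1)) := by rw [shift]; ring
      _ ≤ _ := by gcongr; exact levels t ht
  calc ∫⁻ x, g x ^ p ∂ν
      = ENNReal.ofReal p * ∫⁻ t in Ioi (0 : ℝ),
          ν {x | ENNReal.ofReal t < g x} * ENNReal.ofReal (t ^ (p - 1)) := by
        simpa using lintegral_mul_rpow_eq_lintegral_setLIntegral_lt ν measurable_one hg hp₀
    _ ≤ ENNReal.ofReal p * (ν univ * ENNReal.ofReal (t₀ ^ p / p) +
          (∫⁻ y, h y ^ p ∂π) / ENNReal.ofReal (p - 1)) := by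
        rw [← Ioc_union_Ioi_eq_Ioi ht₀,
          lintegral_union measurableSet_Ioi (Ioc_disjoint_Ioi le_rfl)]
        gcongr
    _ = ENNReal.ofReal (t₀ ^ p) * ν univ +
          ENNReal.ofReal (p / (p - 1)) * ∫⁻ y, h y ^ p ∂π := by
        rw [mul_add, mul_left_comm, ← ENNReal.ofReal_mul hp₀.le, mul_div_cancel₀ _ hp₀.ne',
          mul_comm (ν univ), ENNReal.ofReal_div_of_pos hp₁, ENNReal.mul_comm_div]

end LayerCake

section BallAverage

theorem laverage_le_laverage_indicator_add {α : Type*} [MeasurableSpace α] (ν : Measure α)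
    (f : α → ℝ≥0∞) (η : ℝ≥0∞) :
    ⨍⁻ y, f y ∂ν ≤ (⨍⁻ y, {y | η < f y}.indicator f y ∂ν) + η := by
  have pointwise (y : α) : f y ≤ {y | η < f y}.indicator f y + η := by
    by_cases h : η < f y
    · simp [h]
    · simpa [h] using not_lt.1 h
  calc ⨍⁻ y, f y ∂ν
      ≤ ⨍⁻ y, ({y | η < f y}.indicator f y + η) ∂ν := lintegral_mono pointwise
    _ = (⨍⁻ y, {y | η < f y}.indicator f y ∂ν) + η * ((ν univ)⁻¹ * ν univ) := by
      simp only [laverage, lintegral_add_right _ measurable_const, lintegral_const,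
        Measure.smul_apply, smul_eq_mul]
    _ ≤ (⨍⁻ y, {y | η < f y}.indicator f y ∂ν) + η := by
      gcongr
      exact mul_le_of_le_one_right' (ENNReal.inv_mul_le_one _)

variable {V : Type*} [NormedAddCommGroup V] [NormedSpace ℝ V] [FiniteDimensional ℝ V]
  [MeasurableSpace V] [BorelSpace V] {μ : Measure V} [μ.IsAddHaarMeasure] {f : V → ℝ≥0∞}

theorem measurable_indicator_ball (hf : Measurable f) :
    Measurable fun z : (V × ℝ) × V => (ball z.1.1 z.1.2).indicator f z.2 :=
  Measurable.indicator (f := fun z : (V × ℝ) × V => f z.2) (by fun_prop)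
    (s := {z : (V × ℝ) × V | dist z.2 z.1.1 < z.1.2})
    (measurableSet_lt (by fun_prop) (by fun_prop))

theorem measurable_laverage_ball (hf : Measurable f) :
    Measurable fun z : V × ℝ => ⨍⁻ y in ball z.1 z.2, f y ∂μ := by
  have volume_mono : Monotone fun s : ℝ => μ (ball 0 s) :=
    fun _ _ h => measure_mono (ball_subset_ball h)
  simp_rw [setLAverage_eq, Measure.addHaar_ball_center,
    ← lintegral_indicator (measurableSet_ball (α := V))]
  exact (measurable_indicator_ball hf).lintegral_prod_right'.div
    (volume_mono.measurable.comp measurable_snd)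

theorem setLIntegral_laverage_ball_le (hf : Measurable f) (x₀ : V) (ρ s : ℝ) :
    ∫⁻ x in ball x₀ ρ, ⨍⁻ y in ball x s, f y ∂μ ∂μ ≤ ∫⁻ y in ball x₀ (ρ + s), f y ∂μ := by
  have hF : Measurable (Function.uncurry fun x y : V => (ball x s).indicator f y) :=
    (measurable_indicator_ball hf).comp
      (show Measurable fun z : V × V => ((z.1, s), z.2) by fun_prop)
  have symm (x y : V) : (ball x s).indicator f y = (ball y s).indicator (fun _ => f y) x := by
    simp only [indicator, mem_ball, dist_comm]
  calc ∫⁻ x in ball x₀ ρ, ⨍⁻ y in ball x s, f y ∂μ ∂μ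
      = ∫⁻ x in ball x₀ ρ, (μ (ball 0 s))⁻¹ *
          ∫⁻ y in ball x₀ (ρ + s), (ball x s).indicator f y ∂μ ∂μ := by
        refine setLIntegral_congr_fun measurableSet_ball fun x hx => ?_
        have : ball x s ⊆ ball x₀ (ρ + s) := ball_subset_ball' (by linarith [mem_ball.1 hx])
        simp only [setLAverage_eq, Measure.addHaar_ball_center, setLIntegral_indicator
          measurableSet_ball, inter_eq_left.2 this, ENNReal.div_eq_inv_mul]
    _ = ∫⁻ y in ball x₀ (ρ + s), (μ (ball 0 s))⁻¹ *
          ∫⁻ x in ball x₀ ρ, (ball x s).indicator f y ∂μ ∂μ := by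
        rw [lintegral_const_mul _ (by exact hF.lintegral_prod_right'),
          lintegral_lintegral_swap hF.aemeasurable,
          lintegral_const_mul _ (by exact hF.lintegral_prod_left')]
    _ ≤ ∫⁻ y in ball x₀ (ρ + s), f y ∂μ := by
        refine lintegral_mono fun y => ?_
        calc (μ (ball 0 s))⁻¹ * ∫⁻ x in ball x₀ ρ, (ball x s).indicator f y ∂μ
            ≤ (μ (ball 0 s))⁻¹ * ∫⁻ x, (ball y s).indicator (fun _ => f y) x ∂μ := by
              simp only [symm]
              gcongr
              exact Measure.restrict_le_self
          _ = f y * ((μ (ball 0 s))⁻¹ * μ (ball 0 s)) := by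
              rw [lintegral_indicator measurableSet_ball, setLIntegral_const,
                Measure.addHaar_ball_center μ y, mul_left_comm]
          _ ≤ f y := mul_le_of_le_one_right' (ENNReal.inv_mul_le_one _)

theorem laverage_ball_le_of_subset {x z : V} {c r : ℝ} (hc : 0 < c)
    (h : ball z r ⊆ ball x (c * r)) :
    ⨍⁻ y in ball z r, f y ∂μ ≤
      ENNReal.ofReal (c ^ Module.finrank ℝ V) * ⨍⁻ y in ball x (c * r), f y ∂μ := by
  have hc' : ENNReal.ofReal (c ^ Module.finrank ℝ V) ≠ 0 := by simpa using pow_pos hc _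
  calc ⨍⁻ y in ball z r, f y ∂μ
      ≤ (∫⁻ y in ball x (c * r), f y ∂μ) / μ (ball 0 r) := by
        rw [setLAverage_eq, Measure.addHaar_ball_center]
        gcongr
    _ = _ := by
        rw [setLAverage_eq, Measure.addHaar_ball_mul_of_pos μ x hc, ← mul_div_assoc,
          ENNReal.mul_div_mul_left _ _ hc' ENNReal.ofReal_ne_top]

theorem laverage_ball_le_ofReal_pow_mul_laverage_ball {x : V} {L ρ : ℝ}
    (hL : 0 < L) (hLρ : L ≤ ρ) (hf : ∀ y ∉ ball x L, f y = 0) :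
    ⨍⁻ y in ball x ρ, f y ∂μ ≤
      ENNReal.ofReal ((L / ρ) ^ Module.finrank ℝ V) * ⨍⁻ y in ball x L, f y ∂μ := by
  have hρ : 0 < ρ := hL.trans_le hLρ
  have volume_ratio : μ (ball x L) =
      ENNReal.ofReal ((L / ρ) ^ Module.finrank ℝ V) * μ (ball x ρ) := by
    conv_lhs => rw [← div_mul_cancel₀ L hρ.ne']
    rw [Measure.addHaar_ball_mul_of_pos μ x (by positivity), Measure.addHaar_ball_center μ x]
  have ratio_ne_zero : ENNReal.ofReal ((L / ρ) ^ Module.finrank ℝ V) ≠ 0 :=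
    (ENNReal.ofReal_pos.2 (by positivity)).ne'
  have integral_le : ∫⁻ y in ball x ρ, f y ∂μ ≤ ∫⁻ y in ball x L, f y ∂μ :=
    (setLIntegral_le_lintegral _ _).trans_eq
      (setLIntegral_eq_of_support_subset
        (fun y hy => by_contra fun hyL => hy (hf y hyL))).symm
  rw [setLAverage_eq, setLAverage_eq, volume_ratio, ← mul_div_assoc,
    ENNReal.mul_div_mul_left _ _ ratio_ne_zero ENNReal.ofReal_ne_top]
  gcongr

theorem lintegral_comp_lineMap (hf : Measurable f) (x : V) {c : ℝ} (hc : 0 < c) :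
    ∫⁻ y, f (AffineMap.lineMap x y c) ∂μ =
      (∫⁻ y, f y ∂μ) / ENNReal.ofReal (c ^ Module.finrank ℝ V) := by
  have hfx : Measurable fun z => f (z + x) := by fun_prop
  simp only [AffineMap.lineMap_apply, vsub_eq_sub, vadd_eq_add]
  rw [lintegral_sub_right_eq_self (fun y => f (c • y + x)) x,
    ← lintegral_map (μ := μ) hfx (measurable_const_smul c), Measure.map_addHaar_smul _ hc.ne',
    lintegral_smul_measure, lintegral_add_right_eq_self f x, smul_eq_mul, mul_comm,
    abs_of_pos (by positivity), ENNReal.ofReal_inv_of_pos (by positivity), ← div_eq_mul_inv]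

theorem laverage_ball_comp_lineMap (hf : Measurable f) (x : V) {c : ℝ} (hc : 0 < c) (r : ℝ) :
    ⨍⁻ y in ball x r, f (AffineMap.lineMap x y c) ∂μ = ⨍⁻ y in ball x (c * r), f y ∂μ := by
  have preimage_ball : (fun y => AffineMap.lineMap x y c) ⁻¹' ball x (c * r) = ball x r := by
    ext y
    simp [dist_comm x, abs_of_pos hc, hc]
  have ball_indicator : ∫⁻ y in ball x r, f (AffineMap.lineMap x y c) ∂μ =
      ∫⁻ y, (ball x (c * r)).indicator f (AffineMap.lineMap x y c) ∂μ := by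
    rw [← lintegral_indicator measurableSet_ball, ← preimage_ball]
    rfl
  rw [setLAverage_eq, setLAverage_eq, ball_indicator,
    lintegral_comp_lineMap (hf.indicator measurableSet_ball) x hc,
    lintegral_indicator measurableSet_ball, Measure.addHaar_ball_center,
    Measure.addHaar_ball_mul_of_pos μ x hc, ENNReal.div_eq_inv_mul, ENNReal.div_eq_inv_mul,
    ENNReal.div_eq_inv_mul, ENNReal.mul_inv (by simp [hc]) (by simp), ← mul_assoc,
    mul_comm (ENNReal.ofReal _)⁻¹]

end BallAverage

section RieszPotential

theorem setLIntegral_Ioi_le_of_le_rpow {A : ℝ → ℝ≥0∞} {K r ν : ℝ} (hK : 0 ≤ K) (hr : 0 < r)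
    (hν : 1 < ν) (hA : ∀ s > 0, A s ≤ ENNReal.ofReal (K * s ^ (-ν))) :
    ∫⁻ s in Ioi r, A s ≤ ENNReal.ofReal (K * (r ^ (1 - ν) / (ν - 1))) := by
  calc ∫⁻ s in Ioi r, A s
      ≤ ∫⁻ s in Ioi r, ENNReal.ofReal K * ENNReal.ofReal (s ^ (-ν)) :=
        setLIntegral_mono' measurableSet_Ioi fun s hs => by
          rw [← ENNReal.ofReal_mul hK]
          exact hA s (hr.trans hs)
    _ = ENNReal.ofReal (K * (r ^ (1 - ν) / (ν - 1))) := by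
        rw [lintegral_const_mul _ (by fun_prop), lintegral_Ioi_rpow_of_lt (by linarith) hr,
          ← ENNReal.ofReal_mul hK, show -ν + 1 = -(ν - 1) by ring, neg_div_neg_eq, neg_sub]

variable {X : Type*} [PseudoMetricSpace X] [MeasurableSpace X] {μ : Measure X}

/-- The Riesz potential of order one of `f`, in the layered form `∫₀^∞ ⨍_{B_s(x)} f ds`. For
Haar measure on a normed space of dimension `n ≥ 2`, Fubini's theorem identifies it with a constant
multiple of the convolution of `f` with `‖·‖ ^ (1 - n)`. -/
def rieszPotential (μ : Measure X) (f : X → ℝ≥0∞) (x : X) : ℝ≥0∞ :=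
  ∫⁻ s in Ioi (0 : ℝ), ⨍⁻ y in ball x s, f y ∂μ

theorem rieszPotential_const_mul {c : ℝ≥0∞} (hc : c ≠ ⊤) (f : X → ℝ≥0∞) (x : X) :
    rieszPotential μ (fun y => c * f y) x = c * rieszPotential μ f x := by
  simp only [rieszPotential, laverage, lintegral_const_mul' _ _ hc]

theorem setLIntegral_Ioc_laverage_le_indicator_add (f : X → ℝ≥0∞) (η : ℝ≥0∞) (x : X) (r : ℝ) :
    ∫⁻ s in Ioc 0 r, ⨍⁻ y in ball x s, f y ∂μ ≤
      (∫⁻ s in Ioc 0 r, ⨍⁻ y in ball x s, {y | η < f y}.indicator f y ∂μ) +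
        η * ENNReal.ofReal r :=
  calc ∫⁻ s in Ioc 0 r, ⨍⁻ y in ball x s, f y ∂μ
      ≤ ∫⁻ s in Ioc 0 r, ((⨍⁻ y in ball x s, {y | η < f y}.indicator f y ∂μ) + η) :=
        lintegral_mono fun _ => laverage_le_laverage_indicator_add _ f η
    _ = _ := by
        rw [lintegral_add_right _ measurable_const, setLIntegral_const, Real.volume_Ioc, sub_zero]

theorem le_setLIntegral_Ioc_laverage_of_lt_rieszPotential {f : X → ℝ≥0∞} {x : X} {r t : ℝ}
    (hr : 0 < r) (ht : 0 < t)
    (tail : ∫⁻ s in Ioi r, ⨍⁻ y in ball x s, f y ∂μ ≤ ENNReal.ofReal (t / 2))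
    (hx : ENNReal.ofReal t < rieszPotential μ f x) :
    ENNReal.ofReal (t / 4) ≤ ∫⁻ s in Ioc 0 r,
      ⨍⁻ y in ball x s, {y | ENNReal.ofReal (t / (4 * r)) < f y}.indicator f y ∂μ := by
  set η := ENNReal.ofReal (t / (4 * r)) with hη
  set near := ∫⁻ s in Ioc 0 r, ⨍⁻ y in ball x s, {y | η < f y}.indicator f y ∂μ
  have split : ENNReal.ofReal (t / 4) + ENNReal.ofReal (t / 4 + t / 2) ≤
      near + ENNReal.ofReal (t / 4 + t / 2) :=
    calc ENNReal.ofReal (t / 4) + ENNReal.ofReal (t / 4 + t / 2)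
        = ENNReal.ofReal t := by rw [← ENNReal.ofReal_add (by positivity) (by positivity)]; ring_nf
      _ ≤ rieszPotential μ f x := hx.le
      _ = (∫⁻ s in Ioc 0 r, ⨍⁻ y in ball x s, f y ∂μ) +
            ∫⁻ s in Ioi r, ⨍⁻ y in ball x s, f y ∂μ := by
          rw [rieszPotential, ← Ioc_union_Ioi_eq_Ioi hr.le,
            lintegral_union measurableSet_Ioi (Ioc_disjoint_Ioi le_rfl)]
      _ ≤ (near + η * ENNReal.ofReal r) + ENNReal.ofReal (t / 2) := by
          gcongr
          exact setLIntegral_Ioc_laverage_le_indicator_add f η x r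
      _ = near + ENNReal.ofReal (t / 4 + t / 2) := by
          rw [hη, ← ENNReal.ofReal_mul (by positivity), add_assoc,
            ← ENNReal.ofReal_add (by positivity) (by positivity)]
          field_simp
  exact (ENNReal.add_le_add_iff_right ENNReal.ofReal_ne_top).1 split

variable {V : Type*} [NormedAddCommGroup V] [NormedSpace ℝ V] [FiniteDimensional ℝ V]
  [MeasurableSpace V] [BorelSpace V] {μ : Measure V} [μ.IsAddHaarMeasure] {f : V → ℝ≥0∞}

theorem measurable_rieszPotential (hf : Measurable f) : Measurable (rieszPotential μ f) :=
  (measurable_laverage_ball hf).lintegral_prod_right'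

theorem setLIntegral_ball_setLIntegral_Ioc_laverage_le (hf : Measurable f) (x₀ : V) (ρ r : ℝ) :
    ∫⁻ x in ball x₀ ρ, (∫⁻ s in Ioc 0 r, ⨍⁻ y in ball x s, f y ∂μ) ∂μ ≤
      ENNReal.ofReal r * ∫⁻ y in ball x₀ (ρ + r), f y ∂μ := by
  rw [lintegral_lintegral_swap (by exact (measurable_laverage_ball hf).aemeasurable)]
  calc ∫⁻ s in Ioc 0 r, ∫⁻ x in ball x₀ ρ, ⨍⁻ y in ball x s, f y ∂μ ∂μ
      ≤ ∫⁻ _ in Ioc 0 r, ∫⁻ y in ball x₀ (ρ + r), f y ∂μ :=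
        setLIntegral_mono' measurableSet_Ioc fun _ hs =>
          (setLIntegral_laverage_ball_le hf x₀ ρ _).trans
            (lintegral_mono_set (ball_subset_ball (by linarith [hs.2])))
    _ = _ := by rw [setLIntegral_const, Real.volume_Ioc, sub_zero, mul_comm]

theorem mul_meas_lt_rieszPotential_le (hf : Measurable f) {S : Set V} {x₀ : V} {ρ r t : ℝ}
    (hS : S ⊆ ball x₀ ρ) (hr : 0 < r) (ht : 0 < t)
    (tail : ∀ x ∈ S, ∫⁻ s in Ioi r, ⨍⁻ y in ball x s, f y ∂μ ≤ ENNReal.ofReal (t / 2)) :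
    ENNReal.ofReal (t / (4 * r)) * μ (S ∩ {x | ENNReal.ofReal t < rieszPotential μ f x}) ≤
      ∫⁻ y in ball x₀ (ρ + r), {y | ENNReal.ofReal (t / (4 * r)) < f y}.indicator f y ∂μ := by
  set η := ENNReal.ofReal (t / (4 * r))
  set G := {y | η < f y}.indicator f
  have hG : Measurable G := hf.indicator (measurableSet_lt measurable_const hf)
  set near : V → ℝ≥0∞ := fun x => ∫⁻ s in Ioc 0 r, ⨍⁻ y in ball x s, G y ∂μ
  have hnear : Measurable near := (measurable_laverage_ball hG).lintegral_prod_right'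
  have subset : S ∩ {x | ENNReal.ofReal t < rieszPotential μ f x} ⊆
      {x | ENNReal.ofReal (t / 4) ≤ near x} ∩ ball x₀ ρ := fun x hx =>
    ⟨le_setLIntegral_Ioc_laverage_of_lt_rieszPotential hr ht (tail x hx.1) hx.2, hS hx.1⟩
  have chebyshev : ENNReal.ofReal (t / 4) *
      μ (S ∩ {x | ENNReal.ofReal t < rieszPotential μ f x}) ≤
        ENNReal.ofReal r * ∫⁻ y in ball x₀ (ρ + r), G y ∂μ :=
    calc _ ≤ ENNReal.ofReal (t / 4) *
            μ.restrict (ball x₀ ρ) {x | ENNReal.ofReal (t / 4) ≤ near x} := by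
          rw [Measure.restrict_apply' measurableSet_ball]
          gcongr
      _ ≤ ∫⁻ x in ball x₀ ρ, near x ∂μ := mul_meas_ge_le_lintegral hnear _
      _ ≤ _ := setLIntegral_ball_setLIntegral_Ioc_laverage_le hG x₀ ρ r
  rw [show t / 4 = r * (t / (4 * r)) by field_simp, ENNReal.ofReal_mul hr.le, mul_assoc]
    at chebyshev
  exact (ENNReal.mul_le_mul_iff_right (by simpa using hr) ENNReal.ofReal_ne_top).1 chebyshev

theorem ofReal_rpow_neg_lt_rpow_iff {r ν : ℝ} (hr : 0 < r) (hν : 1 < ν) (a : ℝ≥0∞) :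
    ENNReal.ofReal (r ^ (-ν)) < a ^ (ν / (ν - 1)) ↔ ENNReal.ofReal (r ^ (1 - ν)) < a := by
  have hν₁ : 0 < ν - 1 := sub_pos.2 hν
  rw [← inv_div, ENNReal.lt_rpow_inv_iff (by positivity),
    ENNReal.ofReal_rpow_of_nonneg (by positivity) (by positivity), ← Real.rpow_mul hr.le]
  congr! 3
  field_simp
  ring

theorem ofReal_mul_meas_lt_rieszPotential_rpow_le (hf : Measurable f) {S : Set V} {x₀ : V}
    {ν ρ t : ℝ} (hν : 1 < ν) (hρ : 0 < ρ) (hS : S ⊆ ball x₀ ρ)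
    (decay : ∀ x ∈ S, ∀ s > 0, ⨍⁻ y in ball x s, f y ∂μ ≤ ENNReal.ofReal ((ν - 1) / 2 * s ^ (-ν)))
    (ht : ρ ^ (-ν) < t) :
    ENNReal.ofReal t * μ (S ∩ {x | ENNReal.ofReal t < rieszPotential μ f x ^ (ν / (ν - 1))}) ≤
      ∫⁻ y in {y | ENNReal.ofReal t < 4 * f y} ∩ ball x₀ (2 * ρ), 4 * f y ∂μ := by
  have hν₁ : 0 < ν - 1 := sub_pos.2 hν
  have ht₀ : 0 < t := (Real.rpow_pos_of_pos hρ _).trans ht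
  -- The radius at which the decay bound for the far part equals half the level.
  obtain ⟨r, hr, rfl⟩ : ∃ r > 0, r ^ (-ν) = t :=
    ⟨t ^ (-ν)⁻¹, Real.rpow_pos_of_pos ht₀ _, Real.rpow_inv_rpow ht₀.le (by linarith)⟩
  have hrρ : r ≤ ρ := ((Real.rpow_lt_rpow_iff_of_neg hρ hr (by linarith)).1 ht).le
  have tail (x : V) (hx : x ∈ S) :
      ∫⁻ s in Ioi r, ⨍⁻ y in ball x s, f y ∂μ ≤ ENNReal.ofReal (r ^ (1 - ν) / 2) := by
    convert setLIntegral_Ioi_le_of_le_rpow (by positivity) hr hν (decay x hx) using 2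
    field_simp
  have weak := mul_meas_lt_rieszPotential_le hf hS hr (Real.rpow_pos_of_pos hr (1 - ν)) tail
  have scaled_level : ENNReal.ofReal (r ^ (1 - ν) / (4 * r)) = ENNReal.ofReal (r ^ (-ν)) / 4 := by
    rw [sub_eq_neg_add, Real.rpow_add_one hr.ne', mul_div_mul_right _ _ hr.ne',
      ENNReal.ofReal_div_of_pos four_pos, ENNReal.ofReal_ofNat]
  have four : (4 : ℝ≥0∞) ≠ 0 ∧ (4 : ℝ≥0∞) ≠ ⊤ := by norm_num
  simp only [scaled_level, ENNReal.div_lt_iff (Or.inl four.1) (Or.inl four.2),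
    mul_comm (f _) 4] at weak
  rw [setLIntegral_indicator (measurableSet_lt (by fun_prop) (by fun_prop))] at weak
  simp only [ofReal_rpow_neg_lt_rpow_iff hr hν]
  rw [lintegral_const_mul _ hf]
  calc _ = 4 * (ENNReal.ofReal (r ^ (-ν)) / 4 *
            μ (S ∩ {x | ENNReal.ofReal (r ^ (1 - ν)) < rieszPotential μ f x})) := by
        rw [← mul_assoc, ENNReal.mul_div_cancel four.1 four.2]
    _ ≤ _ := by
        gcongr
        exact weak.trans (lintegral_mono_set (by gcongr; linarith))

theorem setLIntegral_rieszPotential_rpow_le (hf : Measurable f) {S : Set V} {x₀ : V}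
    {p ν ρ : ℝ} (hp : 1 < p) (hν : 1 < ν) (hρ : 0 < ρ) (hS : S ⊆ ball x₀ ρ)
    (decay : ∀ x ∈ S, ∀ s > 0, ⨍⁻ y in ball x s, f y ∂μ ≤ ENNReal.ofReal ((ν - 1) / 2 * s ^ (-ν))) :
    ∫⁻ x in S, (rieszPotential μ f x ^ (ν / (ν - 1))) ^ p ∂μ ≤
      ENNReal.ofReal ((ρ ^ (-ν)) ^ p) * μ S +
        ENNReal.ofReal (p / (p - 1) * 4 ^ p) * ∫⁻ y in ball x₀ (2 * ρ), f y ^ p ∂μ := by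
  have hI : Measurable (rieszPotential μ f) := measurable_rieszPotential hf
  have hp₁ : 0 < p - 1 := sub_pos.2 hp
  have four_mul_rpow : ENNReal.ofReal (4 ^ p) * ∫⁻ y in ball x₀ (2 * ρ), f y ^ p ∂μ =
      ∫⁻ y in ball x₀ (2 * ρ), (4 * f y) ^ p ∂μ := by
    simp only [ENNReal.mul_rpow_of_nonneg _ _ (zero_le_one.trans hp.le)]
    rw [lintegral_const_mul _ (by fun_prop), ← ENNReal.ofReal_rpow_of_pos four_pos,
      ENNReal.ofReal_ofNat]
  rw [ENNReal.ofReal_mul (by positivity), mul_assoc, four_mul_rpow,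
    ← Measure.restrict_apply_univ S]
  refine lintegral_rpow_le_of_forall_gt_mul_meas_le (by fun_prop) (by fun_prop) hp
    (by positivity) fun t ht => ?_
  rw [Measure.restrict_apply (measurableSet_lt (by fun_prop) (by fun_prop)), inter_comm,
    Measure.restrict_restrict (measurableSet_lt (by fun_prop) (by fun_prop))]
  exact ofReal_mul_meas_lt_rieszPotential_rpow_le hf hν hρ hS decay ht

end RieszPotential

section MorreyNorm

open scoped NNReal ProbabilityTheory

theorem ofReal_rpow_mul_le_iff {ρ : ℝ} (hρ : 0 < ρ) (ν : ℝ) {a b : ℝ≥0∞} :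
    ENNReal.ofReal (ρ ^ ν) * a ≤ b ↔ a ≤ ENNReal.ofReal (ρ ^ (-ν)) * b := by
  rw [Real.rpow_neg hρ.le, ENNReal.ofReal_inv_of_pos (by positivity), mul_comm,
    ← ENNReal.div_eq_inv_mul,
    ENNReal.le_div_iff_mul_le (Or.inl (ENNReal.ofReal_pos.2 (by positivity)).ne')
      (Or.inl ENNReal.ofReal_ne_top)]

variable {X ε : Type*} [MeasurableSpace X] {μ : Measure X}

theorem eLpNorm_cond_rpow [ENorm ε] (μ : Measure X) (s : Set X) (g : X → ε) {p : ℝ} (hp : 0 < p) :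
    eLpNorm g (ENNReal.ofReal p) μ[|s] ^ p = ⨍⁻ y in s, ‖g y‖ₑ ^ p ∂μ := by
  rw [eLpNorm_eq_lintegral_rpow_enorm_toReal (by simpa using hp) ENNReal.ofReal_ne_top,
    ENNReal.toReal_ofReal hp.le, one_div, ENNReal.rpow_inv_rpow hp.ne', setLAverage_eq']
  rfl

theorem eLpNorm_one_cond [TopologicalSpace ε] [ESeminormedAddMonoid ε] (μ : Measure X)
    (s : Set X) (g : X → ε) : eLpNorm g 1 μ[|s] = ⨍⁻ y in s, ‖g y‖ₑ ∂μ := by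
  rw [eLpNorm_one_eq_lintegral_enorm, setLAverage_eq']
  rfl

variable [PseudoMetricSpace X]

/-- The Morrey norm `sup ρ ^ ν * (⨍_{B_ρ(x)} ‖g 1_Ω‖ ^ p) ^ (1 / p)` of `g` over all balls centred
in `Ω`, with values in `[0, ∞]`. Averages are `L^p` norms for the conditional measure
`μ[|ball x ρ]`. -/
def eMorreyNorm [ENorm ε] [Zero ε] (g : X → ε) (p : ℝ≥0∞) (ν : ℝ) (Ω : Set X) (μ : Measure X) :
    ℝ≥0∞ :=
  ⨆ (ρ : ℝ) (_ : 0 < ρ) (x : X) (_ : x ∈ Ω),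
    ENNReal.ofReal (ρ ^ ν) * eLpNorm (Ω.indicator g) p μ[|ball x ρ]

theorem eMorreyNorm_le_iff [ENorm ε] [Zero ε] {g : X → ε} {p : ℝ≥0∞} {ν : ℝ} {Ω : Set X}
    {a : ℝ≥0∞} : eMorreyNorm g p ν Ω μ ≤ a ↔ ∀ x ∈ Ω, ∀ ρ > 0,
      eLpNorm (Ω.indicator g) p μ[|ball x ρ] ≤ ENNReal.ofReal (ρ ^ (-ν)) * a := by
  simp only [eMorreyNorm, iSup_le_iff]
  exact ⟨fun h x hx ρ hρ => (ofReal_rpow_mul_le_iff hρ ν).1 (h ρ hρ x hx),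
    fun h ρ hρ x hx => (ofReal_rpow_mul_le_iff hρ ν).2 (h x hx ρ hρ)⟩

theorem eMorreyNorm_congr_enorm {ε' : Type*} [TopologicalSpace ε] [ESeminormedAddMonoid ε]
    [TopologicalSpace ε'] [ESeminormedAddMonoid ε'] {g : X → ε} {g' : X → ε'} {Ω : Set X}
    (h : ∀ x ∈ Ω, ‖g x‖ₑ = ‖g' x‖ₑ) (p : ℝ≥0∞) (ν : ℝ) :
    eMorreyNorm g p ν Ω μ = eMorreyNorm g' p ν Ω μ := by
  have indicator_eq (y : X) : ‖Ω.indicator g y‖ₑ = ‖Ω.indicator g' y‖ₑ := by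
    by_cases hy : y ∈ Ω <;> simp [hy, h]
  simp only [eMorreyNorm, eLpNorm_congr_enorm_ae (ae_of_all _ indicator_eq)]

theorem eMorreyNorm_le_mul_of_enorm_le_mul {ε' : Type*} [TopologicalSpace ε]
    [ESeminormedAddMonoid ε] [TopologicalSpace ε'] [ESeminormedAddMonoid ε'] {g : X → ε}
    {g' : X → ε'} {c : ℝ≥0} {Ω : Set X} (h : ∀ x ∈ Ω, ‖g x‖ₑ ≤ c * ‖g' x‖ₑ) (p : ℝ≥0∞) (ν : ℝ) :
    eMorreyNorm g p ν Ω μ ≤ c * eMorreyNorm g' p ν Ω μ := by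
  have indicator_le (y : X) : ‖Ω.indicator g y‖ₑ ≤ c * ‖Ω.indicator g' y‖ₑ := by
    by_cases hy : y ∈ Ω <;> simp [hy, h]
  refine eMorreyNorm_le_iff.2 fun x hx ρ hρ => ?_
  calc eLpNorm (Ω.indicator g) p μ[|ball x ρ]
      ≤ c * eLpNorm (Ω.indicator g') p μ[|ball x ρ] :=
        eLpNorm_le_nnreal_smul_eLpNorm_of_ae_le_mul' (ae_of_all _ indicator_le) p
    _ ≤ c * (ENNReal.ofReal (ρ ^ (-ν)) * eMorreyNorm g' p ν Ω μ) := by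
        gcongr
        exact eMorreyNorm_le_iff.1 le_rfl x hx ρ hρ
    _ = ENNReal.ofReal (ρ ^ (-ν)) * (c * eMorreyNorm g' p ν Ω μ) := mul_left_comm _ _ _

variable [ProperSpace X] [IsFiniteMeasureOnCompacts μ] [μ.IsOpenPosMeasure]

theorem isProbabilityMeasure_cond_ball (μ : Measure X) [IsFiniteMeasureOnCompacts μ]
    [μ.IsOpenPosMeasure] (x : X) {r : ℝ} (hr : 0 < r) : IsProbabilityMeasure μ[|ball x r] :=
  ProbabilityTheory.cond_isProbabilityMeasure_of_finite (measure_ball_pos μ x hr).ne'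
    measure_ball_lt_top.ne

theorem eLpNorm_cond_ball_le_of_exponent_le [TopologicalSpace ε] [ESeminormedAddMonoid ε]
    {g : X → ε} {p p' : ℝ≥0∞} (hpp' : p ≤ p') (x : X) {r : ℝ} (hr : 0 < r)
    (hg : AEStronglyMeasurable g μ) :
    eLpNorm g p μ[|ball x r] ≤ eLpNorm g p' μ[|ball x r] :=
  have := isProbabilityMeasure_cond_ball μ x hr
  eLpNorm_le_eLpNorm_of_exponent_le hpp' (hg.mono_ac ProbabilityTheory.cond_absolutelyContinuous)

theorem lintegral_ball_rpow_le_of_eLpNorm_cond_le {g : X → ℝ≥0∞} {p : ℝ} (hp : 0 < p) {x : X}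
    {r : ℝ} (hr : 0 < r) {a : ℝ≥0∞} (h : eLpNorm g (ENNReal.ofReal p) μ[|ball x r] ≤ a) :
    ∫⁻ y in ball x r, g y ^ p ∂μ ≤ a ^ p * μ (ball x r) := by
  rw [← ENNReal.div_le_iff (measure_ball_pos μ x hr).ne' measure_ball_lt_top.ne, ← setLAverage_eq]
  simpa only [eLpNorm_cond_rpow μ _ g hp, enorm_eq_self] using
    ENNReal.rpow_le_rpow h hp.le

end MorreyNorm

section Adams

open scoped NNReal ProbabilityTheory

variable {V : Type*} [NormedAddCommGroup V] [NormedSpace ℝ V] [FiniteDimensional ℝ V]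
  [MeasurableSpace V] [BorelSpace V] {μ : Measure V} [μ.IsAddHaarMeasure]

theorem lintegral_ball_two_mul_rpow_le_of_eLpNorm_cond_le {g : V → ℝ≥0∞} {k p ν ρ : ℝ}
    (hk : 0 ≤ k) (hp : 0 < p) (hν : 0 ≤ ν) (hρ : 0 < ρ) {x : V}
    (h : eLpNorm g (ENNReal.ofReal p) μ[|ball x (2 * ρ)] ≤
      ENNReal.ofReal (k * (2 * ρ) ^ (-ν))) :
    ∫⁻ y in ball x (2 * ρ), g y ^ p ∂μ ≤
      ENNReal.ofReal (2 ^ Module.finrank ℝ V * (k * ρ ^ (-ν)) ^ p) * μ (ball x ρ) := by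
  have decay : k * (2 * ρ) ^ (-ν) ≤ k * ρ ^ (-ν) :=
    mul_le_mul_of_nonneg_left
      (Real.rpow_le_rpow_of_nonpos hρ (by linarith) (neg_nonpos.2 hν)) hk
  calc ∫⁻ y in ball x (2 * ρ), g y ^ p ∂μ
      ≤ ENNReal.ofReal (k * ρ ^ (-ν)) ^ p * μ (ball x (2 * ρ)) :=
        lintegral_ball_rpow_le_of_eLpNorm_cond_le hp (by positivity)
          (h.trans (ENNReal.ofReal_le_ofReal decay))
    _ = _ := by
        rw [Measure.addHaar_ball_mul_of_pos μ x two_pos, Measure.addHaar_ball_center μ x,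
          ENNReal.ofReal_rpow_of_nonneg (by positivity) hp.le, ← mul_assoc, mul_comm (2 ^ _),
          ENNReal.ofReal_mul (by positivity)]

/-- `normalizedAdamsConst n p ν ^ (1 / Q)`, with `Q = ν / (ν - 1) * p`, bounds the Morrey norm of
the Riesz potential in dimension `n` for densities normalised to Morrey norm `(ν - 1) / 2`. -/
def normalizedAdamsConst (n : ℕ) (p ν : ℝ) : ℝ :=
  1 + p / (p - 1) * 4 ^ p * (2 ^ n * ((ν - 1) / 2) ^ p)

theorem normalizedAdamsConst_pos (n : ℕ) {p ν : ℝ} (hp : 1 < p) (hν : 1 < ν) :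
    0 < normalizedAdamsConst n p ν := by
  have hp₁ : 0 < p - 1 := sub_pos.2 hp
  have hν₁ : 0 < ν - 1 := sub_pos.2 hν
  rw [normalizedAdamsConst]
  positivity

theorem setLIntegral_rieszPotential_rpow_le_of_eMorreyNorm_le {f : V → ℝ≥0∞} {Ω : Set V}
    (hf : Measurable (Ω.indicator f)) {p ν : ℝ} (hp : 1 < p) (hν : 1 < ν)
    (hfM : eMorreyNorm f (ENNReal.ofReal p) ν Ω μ ≤ ENNReal.ofReal ((ν - 1) / 2))
    {x₀ : V} (hx₀ : x₀ ∈ Ω) {ρ : ℝ} (hρ : 0 < ρ) :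
    ∫⁻ x in Ω ∩ ball x₀ ρ, (rieszPotential μ (Ω.indicator f) x ^ (ν / (ν - 1))) ^ p ∂μ ≤
      ENNReal.ofReal (normalizedAdamsConst (Module.finrank ℝ V) p ν * (ρ ^ (-ν)) ^ p) *
        μ (ball x₀ ρ) := by
  have hν₁ : 0 < ν - 1 := sub_pos.2 hν
  have hp₀ : 0 < p := by linarith
  have hp₁ : 0 < p - 1 := sub_pos.2 hp
  have decay_eLpNorm : ∀ x ∈ Ω, ∀ s > 0,
      eLpNorm (Ω.indicator f) (ENNReal.ofReal p) μ[|ball x s] ≤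
        ENNReal.ofReal ((ν - 1) / 2 * s ^ (-ν)) := fun x hx s hs => by
    rw [mul_comm, ENNReal.ofReal_mul (by positivity)]
    exact eMorreyNorm_le_iff.1 hfM x hx s hs
  have decay : ∀ x ∈ Ω ∩ ball x₀ ρ, ∀ s > 0,
      ⨍⁻ y in ball x s, Ω.indicator f y ∂μ ≤ ENNReal.ofReal ((ν - 1) / 2 * s ^ (-ν)) := by
    intro x hx s hs
    simpa only [eLpNorm_one_cond, enorm_eq_self] using
      (eLpNorm_cond_ball_le_of_exponent_le (ENNReal.one_le_ofReal.2 hp.le) x hs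
        hf.aestronglyMeasurable).trans (decay_eLpNorm x hx.1 s hs)
  calc _ ≤ ENNReal.ofReal ((ρ ^ (-ν)) ^ p) * μ (Ω ∩ ball x₀ ρ) +
        ENNReal.ofReal (p / (p - 1) * 4 ^ p) *
          ∫⁻ y in ball x₀ (2 * ρ), Ω.indicator f y ^ p ∂μ :=
        setLIntegral_rieszPotential_rpow_le hf hp hν hρ inter_subset_right decay
    _ ≤ ENNReal.ofReal ((ρ ^ (-ν)) ^ p) * μ (ball x₀ ρ) +
        ENNReal.ofReal (p / (p - 1) * 4 ^ p) *
          (ENNReal.ofReal (2 ^ Module.finrank ℝ V * ((ν - 1) / 2 * ρ ^ (-ν)) ^ p) *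
            μ (ball x₀ ρ)) := by
        gcongr
        · exact inter_subset_right
        · exact lintegral_ball_two_mul_rpow_le_of_eLpNorm_cond_le (by positivity) hp₀
            (by linarith) hρ (decay_eLpNorm x₀ hx₀ _ (by positivity))
    _ = _ := by
        rw [← mul_assoc, ← ENNReal.ofReal_mul (by positivity), ← add_mul,
          ← ENNReal.ofReal_add (by positivity) (by positivity), normalizedAdamsConst,
          Real.mul_rpow (by positivity) (by positivity)]
        ring_nf

theorem eMorreyNorm_rieszPotential_le_of_eMorreyNorm_le {f : V → ℝ≥0∞} {Ω : Set V}
    (hf : Measurable (Ω.indicator f)) (hΩ : MeasurableSet Ω) {p ν : ℝ} (hp : 1 < p) (hν : 1 < ν)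
    (hfM : eMorreyNorm f (ENNReal.ofReal p) ν Ω μ ≤ ENNReal.ofReal ((ν - 1) / 2)) :
    eMorreyNorm (rieszPotential μ (Ω.indicator f)) (ENNReal.ofReal (ν / (ν - 1) * p)) (ν - 1) Ω μ ≤
      ENNReal.ofReal (normalizedAdamsConst (Module.finrank ℝ V) p ν ^ (ν / (ν - 1) * p)⁻¹) := by
  have hν₁ : 0 < ν - 1 := sub_pos.2 hν
  have hQ : 0 < ν / (ν - 1) * p := by positivity
  have hA := normalizedAdamsConst_pos (Module.finrank ℝ V) hp hν
  refine eMorreyNorm_le_iff.2 fun x₀ hx₀ ρ hρ => ?_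
  have scaling : (ρ ^ (-(ν - 1))) ^ (ν / (ν - 1) * p) = (ρ ^ (-ν)) ^ p := by
    rw [← Real.rpow_mul hρ.le, ← Real.rpow_mul hρ.le]
    congr 1
    field_simp
  rw [← ENNReal.rpow_le_rpow_iff hQ, eLpNorm_cond_rpow μ _ _ hQ,
    ← ENNReal.ofReal_mul (by positivity), ENNReal.ofReal_rpow_of_pos (by positivity),
    Real.mul_rpow (by positivity) (by positivity), Real.rpow_inv_rpow hA.le hQ.ne', scaling,
    mul_comm (_ ^ p), setLAverage_eq]
  refine ENNReal.div_le_of_le_mul ?_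
  refine le_trans (le_of_eq ?_)
    (setLIntegral_rieszPotential_rpow_le_of_eMorreyNorm_le hf hp hν hfM hx₀ hρ)
  rw [← setLIntegral_indicator hΩ]
  refine lintegral_congr fun y => ?_
  by_cases hy : y ∈ Ω <;> simp [hy, ENNReal.rpow_mul, ENNReal.zero_rpow_of_pos hQ]

/-- The constant of Adams' inequality between Morrey norms in dimension `n`, of exponents `p`, `ν`
for the density and `ν / (ν - 1) * p`, `ν - 1` for its Riesz potential. -/
def adamsConst (n : ℕ) (p ν : ℝ) : ℝ :=
  normalizedAdamsConst n p ν ^ (ν / (ν - 1) * p)⁻¹ * (2 / (ν - 1))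

theorem adamsConst_pos (n : ℕ) {p ν : ℝ} (hp : 1 < p) (hν : 1 < ν) : 0 < adamsConst n p ν :=
  mul_pos (Real.rpow_pos_of_pos (normalizedAdamsConst_pos n hp hν) _)
    (div_pos two_pos (sub_pos.2 hν))

theorem eMorreyNorm_rieszPotential_le_mul_of_eMorreyNorm_le {f : V → ℝ≥0∞} {Ω : Set V}
    (hf : Measurable (Ω.indicator f)) (hΩ : MeasurableSet Ω) {p ν : ℝ} (hp : 1 < p) (hν : 1 < ν)
    {K : ℝ≥0} (hK : 0 < K) (hfM : eMorreyNorm f (ENNReal.ofReal p) ν Ω μ ≤ K) :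
    eMorreyNorm (rieszPotential μ (Ω.indicator f)) (ENNReal.ofReal (ν / (ν - 1) * p)) (ν - 1) Ω μ ≤
      ENNReal.ofReal (adamsConst (Module.finrank ℝ V) p ν) * K := by
  have hν₁ : 0 < ν - 1 := sub_pos.2 hν
  let c : ℝ≥0 := K * (2 / (ν - 1)).toNNReal
  have hc : 0 < c := mul_pos hK (Real.toNNReal_pos.2 (by positivity))
  let g : V → ℝ≥0∞ := fun y => (c⁻¹ : ℝ≥0) * f y
  have normalised : eMorreyNorm g (ENNReal.ofReal p) ν Ω μ ≤ ENNReal.ofReal ((ν - 1) / 2) :=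
    calc eMorreyNorm g (ENNReal.ofReal p) ν Ω μ
        ≤ (c⁻¹ : ℝ≥0) * eMorreyNorm f (ENNReal.ofReal p) ν Ω μ :=
          eMorreyNorm_le_mul_of_enorm_le_mul (fun _ _ => le_rfl) _ _
      _ ≤ (c⁻¹ : ℝ≥0) * K := by gcongr
      _ = ENNReal.ofReal ((ν - 1) / 2) := by
          rw [ENNReal.ofReal, ← ENNReal.coe_mul, mul_inv, ← Real.toNNReal_inv, inv_div,
            mul_right_comm, inv_mul_cancel₀ hK.ne', one_mul]
  have indicator_g : Ω.indicator g = fun y => (c⁻¹ : ℝ≥0) * Ω.indicator f y :=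
    funext (Set.indicator_const_mul Ω f _)
  have homogeneous (x : V) : ‖rieszPotential μ (Ω.indicator f) x‖ₑ =
      c * ‖rieszPotential μ (Ω.indicator g) x‖ₑ := by
    rw [indicator_g, rieszPotential_const_mul ENNReal.coe_ne_top, enorm_eq_self, enorm_eq_self,
      ← mul_assoc, ← ENNReal.coe_mul, mul_inv_cancel₀ hc.ne', ENNReal.coe_one, one_mul]
  calc _ ≤ c * ENNReal.ofReal
          (normalizedAdamsConst (Module.finrank ℝ V) p ν ^ (ν / (ν - 1) * p)⁻¹) :=
        (eMorreyNorm_le_mul_of_enorm_le_mul (fun x _ => (homogeneous x).le) _ _).trans (by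
          gcongr
          exact eMorreyNorm_rieszPotential_le_of_eMorreyNorm_le
            (indicator_g ▸ hf.const_mul _) hΩ hp hν normalised)
    _ = _ := by
        have hA := normalizedAdamsConst_pos (Module.finrank ℝ V) hp hν
        rw [adamsConst, ENNReal.ofReal_mul (by positivity), ENNReal.coe_mul, mul_comm,
          mul_comm (K : ℝ≥0∞), mul_assoc]
        rfl

theorem eMorreyNorm_rieszPotential_le {f : V → ℝ≥0∞} {Ω : Set V}
    (hf : Measurable (Ω.indicator f)) (hΩ : MeasurableSet Ω) {p ν : ℝ} (hp : 1 < p) (hν : 1 < ν) :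
    eMorreyNorm (rieszPotential μ (Ω.indicator f)) (ENNReal.ofReal (ν / (ν - 1) * p)) (ν - 1) Ω μ ≤
      ENNReal.ofReal (adamsConst (Module.finrank ℝ V) p ν) *
        eMorreyNorm f (ENNReal.ofReal p) ν Ω μ := by
  have hC : ENNReal.ofReal (adamsConst (Module.finrank ℝ V) p ν) ≠ 0 :=
    (ENNReal.ofReal_pos.2 (adamsConst_pos _ hp hν)).ne'
  refine (ENNReal.div_le_iff' hC ENNReal.ofReal_ne_top).1 ?_
  refine le_of_forall_gt_imp_ge_of_dense fun K hK => ?_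
  induction K with
  | top => exact le_top
  | coe K =>
    exact (ENNReal.div_le_iff' hC ENNReal.ofReal_ne_top).2
      (eMorreyNorm_rieszPotential_le_mul_of_eMorreyNorm_le hf hΩ hp hν
        (ENNReal.coe_pos.1 (bot_le.trans_lt hK)) hK.le)

end Adams

section SegmentRepresentation

variable {V F : Type*} [NormedAddCommGroup V] [NormedSpace ℝ V] [NormedAddCommGroup F]
  [NormedSpace ℝ F]

theorem enorm_le_enorm_add_lintegral_fderiv_lineMap {s : Set V} (hs : Convex ℝ s)
    (hso : IsOpen s) {u : V → F} (hu : ContDiffOn ℝ 1 u s) {x y : V} (hx : x ∈ s) (hy : y ∈ s)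
    {L : ℝ} (hL : 0 < L) (hxy : ‖y - x‖ ≤ L) :
    ‖u x‖ₑ ≤ ‖u y‖ₑ +
      ∫⁻ σ in Ioc 0 L, ‖fderiv ℝ u (AffineMap.lineMap x y (σ / L))‖ₑ := by
  let γ : ℝ → V := fun σ => AffineMap.lineMap x y (σ / L)
  have γ_mem (σ : ℝ) (hσ : σ ∈ Icc 0 L) : γ σ ∈ s :=
    hs.lineMap_mem hx hy ⟨div_nonneg hσ.1 hL.le, div_le_one_of_le₀ hσ.2 hL.le⟩
  have γ_deriv (σ : ℝ) : HasDerivAt γ (L⁻¹ • (y - x)) σ := by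
    rw [← one_div]
    exact AffineMap.hasDerivAt_lineMap.scomp σ ((hasDerivAt_id σ).div_const L)
  have γ_smooth : ContDiff ℝ 1 γ := by
    simp only [γ, AffineMap.lineMap_apply_module]
    fun_prop
  have unit_speed : ‖L⁻¹ • (y - x)‖ₑ ≤ 1 := by
    rw [← enorm_one (G := ℝ), enorm_le_iff_norm_le, norm_smul, norm_inv,
      Real.norm_of_nonneg hL.le, norm_one]
    exact inv_mul_le_one_of_le₀ hxy hL.le
  have deriv_le (σ : ℝ) (hσ : σ ∈ Icc 0 L) : ‖deriv (u ∘ γ) σ‖ₑ ≤ ‖fderiv ℝ u (γ σ)‖ₑ := by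
    have hd : DifferentiableAt ℝ u (γ σ) :=
      (hu.differentiableOn one_ne_zero).differentiableAt (hso.mem_nhds (γ_mem σ hσ))
    rw [(hd.hasFDerivAt.comp_hasDerivAt σ (γ_deriv σ)).deriv]
    exact (ContinuousLinearMap.le_opENorm _ _).trans (mul_le_of_le_one_right' unit_speed)
  calc ‖u x‖ₑ = ‖u y - (u y - u x)‖ₑ := by rw [sub_sub_cancel]
    _ ≤ ‖u y‖ₑ + ‖u y - u x‖ₑ := enorm_sub_le
    _ ≤ ‖u y‖ₑ + ∫⁻ σ in Icc 0 L, ‖deriv (u ∘ γ) σ‖ₑ := by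
        gcongr
        simpa [γ, hL.ne'] using enorm_sub_le_lintegral_deriv_of_contDiffOn_Icc
          (hu.comp γ_smooth.contDiffOn γ_mem) hL.le
    _ ≤ ‖u y‖ₑ + ∫⁻ σ in Ioc 0 L, ‖fderiv ℝ u (γ σ)‖ₑ := by
        rw [restrict_Ioc_eq_restrict_Icc]
        refine add_le_add_right ?_ _
        exact setLIntegral_mono' measurableSet_Icc deriv_le

variable [MeasurableSpace V] [BorelSpace V]

theorem measurable_indicator_enorm_fderiv {u : V → F} {s : Set V} (hs : IsOpen s)
    (hu : ContDiffOn ℝ 1 u s) : Measurable (s.indicator fun y => ‖fderiv ℝ u y‖ₑ) := by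
  classical
  rw [← piecewise_eq_indicator]
  exact (hu.continuousOn_fderiv_of_isOpen hs le_rfl).enorm.measurable_piecewise
    continuousOn_const hs.measurableSet

variable [FiniteDimensional ℝ V] {μ : Measure V} [μ.IsAddHaarMeasure]

theorem measurable_comp_lineMap {f : V → ℝ≥0∞} (hf : Measurable f) (x : V) (L : ℝ) :
    Measurable fun z : V × ℝ => f (AffineMap.lineMap x z.1 (z.2 / L)) := by
  simp only [AffineMap.lineMap_apply_module]
  fun_prop

theorem laverage_ball_lintegral_lineMap_le {f : V → ℝ≥0∞} (hf : Measurable f) {x z : V} {R : ℝ}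
    (hR : 0 < R) (hx : x ∈ ball z R) :
    ⨍⁻ y in ball z R, (∫⁻ σ in Ioc 0 (2 * R), f (AffineMap.lineMap x y (σ / (2 * R)))) ∂μ ≤
      2 ^ Module.finrank ℝ V * rieszPotential μ f x := by
  have subset : ball z R ⊆ ball x (2 * R) := ball_subset_ball' (by
    linarith [mem_ball'.1 hx])
  calc ⨍⁻ y in ball z R, (∫⁻ σ in Ioc 0 (2 * R), f (AffineMap.lineMap x y (σ / (2 * R)))) ∂μ
      = ∫⁻ σ in Ioc 0 (2 * R),
          ⨍⁻ y in ball z R, f (AffineMap.lineMap x y (σ / (2 * R))) ∂μ := by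
        rw [laverage, lintegral_lintegral_swap (measurable_comp_lineMap hf x _).aemeasurable]
        rfl
    _ ≤ ∫⁻ σ in Ioc 0 (2 * R), 2 ^ Module.finrank ℝ V * ⨍⁻ y in ball x σ, f y ∂μ := by
        refine setLIntegral_mono' measurableSet_Ioc fun σ hσ => ?_
        have hσ₀ : 0 < σ / (2 * R) := div_pos hσ.1 (by positivity)
        have dilate := laverage_ball_comp_lineMap (μ := μ) hf x hσ₀ (2 * R)
        rw [div_mul_cancel₀ _ (by positivity)] at dilate
        rw [← dilate]
        simpa [ENNReal.ofReal_pow] using laverage_ball_le_of_subset (μ := μ) two_pos subset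
    _ ≤ ∫⁻ σ in Ioi 0, 2 ^ Module.finrank ℝ V * ⨍⁻ y in ball x σ, f y ∂μ :=
        lintegral_mono_set Ioc_subset_Ioi_self
    _ = _ := lintegral_const_mul' _ _ (by finiteness)

theorem enorm_le_laverage_add_rieszPotential_fderiv {u : V → F} {x z : V} {R : ℝ} (hR : 0 < R)
    (hu : ContDiffOn ℝ 1 u (ball z R)) (hx : x ∈ ball z R) :
    ‖u x‖ₑ ≤ (⨍⁻ y in ball z R, ‖u y‖ₑ ∂μ) + 2 ^ Module.finrank ℝ V *
      rieszPotential μ ((ball z R).indicator fun y => ‖fderiv ℝ u y‖ₑ) x := by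
  set G : V → ℝ≥0∞ := (ball z R).indicator fun y => ‖fderiv ℝ u y‖ₑ with G_def
  have hG : Measurable G := measurable_indicator_enorm_fderiv isOpen_ball hu
  have segment (y : V) (hy : y ∈ ball z R) : ‖u x‖ₑ ≤ ‖u y‖ₑ +
      ∫⁻ σ in Ioc 0 (2 * R), G (AffineMap.lineMap x y (σ / (2 * R))) := by
    have hxy : ‖y - x‖ ≤ 2 * R := by
      rw [← dist_eq_norm]
      linarith [dist_triangle_right y x z, mem_ball.1 hx, mem_ball.1 hy]
    refine (enorm_le_enorm_add_lintegral_fderiv_lineMap (convex_ball z R) isOpen_ball hu hx hy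
      (by positivity) hxy).trans_eq ?_
    congr 1
    refine setLIntegral_congr_fun measurableSet_Ioc fun σ hσ => ?_
    rw [G_def, indicator_of_mem ((convex_ball z R).lineMap_mem hx hy
      ⟨div_nonneg hσ.1.le (by positivity), div_le_one_of_le₀ hσ.2 (by positivity)⟩)]
  calc ‖u x‖ₑ = ⨍⁻ _ in ball z R, ‖u x‖ₑ ∂μ :=
        (setLAverage_const (measure_ball_pos μ z hR).ne' measure_ball_lt_top.ne _).symm
    _ ≤ ⨍⁻ y in ball z R, (‖u y‖ₑ +
          ∫⁻ σ in Ioc 0 (2 * R), G (AffineMap.lineMap x y (σ / (2 * R)))) ∂μ := by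
        rw [setLAverage_eq, setLAverage_eq]
        gcongr ?_ / _
        exact setLIntegral_mono' measurableSet_ball segment
    _ = (⨍⁻ y in ball z R, ‖u y‖ₑ ∂μ) +
          ⨍⁻ y in ball z R, (∫⁻ σ in Ioc 0 (2 * R),
            G (AffineMap.lineMap x y (σ / (2 * R)))) ∂μ := by
        simp only [laverage]
        exact lintegral_add_right _ (measurable_comp_lineMap hG x _).lintegral_prod_right'
    _ ≤ _ := by
        gcongr
        exact laverage_ball_lintegral_lineMap_le hG hR hx

end SegmentRepresentation

section MorreyEmbedding

open scoped ProbabilityTheory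

variable {V : Type*} [NormedAddCommGroup V] [NormedSpace ℝ V] [FiniteDimensional ℝ V]
  [MeasurableSpace V] [BorelSpace V] {μ : Measure V} [μ.IsAddHaarMeasure]

theorem eLpNorm_cond_ball_le_ofReal_rpow_mul {ε : Type*} [ENorm ε] {g : V → ε} {p ν L ρ : ℝ}
    (hp : 0 < p) (hν : ν ≤ Module.finrank ℝ V / p) (hL : 0 < L) (hLρ : L ≤ ρ) {x : V}
    (hg : ∀ y ∉ ball x L, ‖g y‖ₑ = 0) :
    eLpNorm g (ENNReal.ofReal p) μ[|ball x ρ] ≤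
      ENNReal.ofReal ((L / ρ) ^ ν) * eLpNorm g (ENNReal.ofReal p) μ[|ball x L] := by
  have hρ : 0 < ρ := hL.trans_le hLρ
  have pow_le : (L / ρ) ^ Module.finrank ℝ V ≤ ((L / ρ) ^ ν) ^ p := by
    rw [← Real.rpow_mul (by positivity), ← Real.rpow_natCast]
    exact Real.rpow_le_rpow_of_exponent_ge (by positivity) (div_le_one_of_le₀ hLρ hρ.le)
      ((le_div_iff₀ hp).1 hν)
  rw [← ENNReal.rpow_le_rpow_iff hp, ENNReal.mul_rpow_of_nonneg _ _ hp.le,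
    eLpNorm_cond_rpow μ _ g hp, eLpNorm_cond_rpow μ _ g hp,
    ENNReal.ofReal_rpow_of_nonneg (by positivity) hp.le]
  refine (laverage_ball_le_ofReal_pow_mul_laverage_ball hL hLρ fun y hy => ?_).trans ?_
  · rw [hg y hy, ENNReal.zero_rpow_of_pos hp]
  · gcongr

theorem eMorreyNorm_ball_le_of_forall_radius_le {ε : Type*} [TopologicalSpace ε]
    [ESeminormedAddMonoid ε] {g : V → ε} {p ν R : ℝ} (hp : 0 < p)
    (hν : ν ≤ Module.finrank ℝ V / p) (hR : 0 < R) {z : V} {a : ℝ≥0∞}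
    (h : ∀ x ∈ ball z R, ∀ ρ > 0, ρ ≤ 2 * R →
      eLpNorm ((ball z R).indicator g) (ENNReal.ofReal p) μ[|ball x ρ] ≤
        ENNReal.ofReal (ρ ^ (-ν)) * a) :
    eMorreyNorm g (ENNReal.ofReal p) ν (ball z R) μ ≤ a := by
  refine eMorreyNorm_le_iff.2 fun x hx ρ hρ => ?_
  rcases le_total ρ (2 * R) with small | large
  · exact h x hx ρ hρ small
  have vanishes : ∀ y ∉ ball x (2 * R), ‖(ball z R).indicator g y‖ₑ = 0 := by
    intro y hy
    rw [indicator_of_notMem, enorm_zero]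
    exact fun hyz => hy (mem_ball.2 (by
      linarith [dist_triangle_right y x z, mem_ball.1 hx, mem_ball.1 hyz]))
  have scaling : (2 * R / ρ) ^ ν * (2 * R) ^ (-ν) = ρ ^ (-ν) := by
    rw [Real.div_rpow (by positivity) hρ.le, Real.rpow_neg (by positivity), Real.rpow_neg hρ.le]
    field_simp
  calc eLpNorm ((ball z R).indicator g) (ENNReal.ofReal p) μ[|ball x ρ]
      ≤ ENNReal.ofReal ((2 * R / ρ) ^ ν) *
          eLpNorm ((ball z R).indicator g) (ENNReal.ofReal p) μ[|ball x (2 * R)] :=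
        eLpNorm_cond_ball_le_ofReal_rpow_mul hp hν (by positivity) large vanishes
    _ ≤ ENNReal.ofReal ((2 * R / ρ) ^ ν) * (ENNReal.ofReal ((2 * R) ^ (-ν)) * a) := by
        gcongr
        exact h x hx _ (by positivity) le_rfl
    _ = ENNReal.ofReal (ρ ^ (-ν)) * a := by
        rw [← mul_assoc, ← ENNReal.ofReal_mul (by positivity), scaling]

variable {F : Type*} [NormedAddCommGroup F] {u : V → F} {p ν R : ℝ} {z : V}

theorem laverage_ball_enorm_le_eMorreyNorm (hp : 1 ≤ p) (hR : 0 < R)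
    (hu : AEStronglyMeasurable ((ball z R).indicator u) μ) :
    ⨍⁻ y in ball z R, ‖u y‖ₑ ∂μ ≤
      ENNReal.ofReal (R ^ (-ν)) * eMorreyNorm u (ENNReal.ofReal p) ν (ball z R) μ :=
  calc ⨍⁻ y in ball z R, ‖u y‖ₑ ∂μ
      = eLpNorm ((ball z R).indicator u) 1 μ[|ball z R] := by
        rw [eLpNorm_one_cond, setLAverage_eq, setLAverage_eq]
        congr 1
        exact setLIntegral_congr_fun measurableSet_ball fun y hy => by rw [indicator_of_mem hy]
    _ ≤ eLpNorm ((ball z R).indicator u) (ENNReal.ofReal p) μ[|ball z R] :=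
        eLpNorm_cond_ball_le_of_exponent_le (ENNReal.one_le_ofReal.2 hp) z hR hu
    _ ≤ _ := eMorreyNorm_le_iff.1 le_rfl z (mem_ball_self hR) R hR

theorem laverage_ball_enorm_le_rpow_mul_eMorreyNorm (hp : 1 ≤ p) (hν : 1 ≤ ν) (hR : 0 < R)
    (hu : AEStronglyMeasurable ((ball z R).indicator u) μ) {ρ : ℝ} (hρ : 0 < ρ)
    (hρR : ρ ≤ 2 * R) :
    ⨍⁻ y in ball z R, ‖u y‖ₑ ∂μ ≤ ENNReal.ofReal (ρ ^ (-(ν - 1))) *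
      (ENNReal.ofReal (2 ^ (ν - 1) * R⁻¹) * eMorreyNorm u (ENNReal.ofReal p) ν (ball z R) μ) := by
  refine (laverage_ball_enorm_le_eMorreyNorm (ν := ν) hp hR hu).trans ?_
  rw [← mul_assoc, ← ENNReal.ofReal_mul (by positivity)]
  gcongr
  calc R ^ (-ν) = (2 * R) ^ (-(ν - 1)) * (2 ^ (ν - 1) * R⁻¹) := by
        rw [Real.mul_rpow two_pos.le hR.le, mul_mul_mul_comm, ← Real.rpow_add two_pos,
          ← Real.rpow_neg_one R, ← Real.rpow_add hR]
        ring_nf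
        simp
    _ ≤ ρ ^ (-(ν - 1)) * (2 ^ (ν - 1) * R⁻¹) := by
        gcongr ?_ * _
        exact Real.rpow_le_rpow_of_nonpos hρ hρR (by linarith)

variable [NormedSpace ℝ F]

theorem eLpNorm_indicator_ball_le_laverage_add_rieszPotential_fderiv (hR : 0 < R)
    (hu : ContDiffOn ℝ 1 u (ball z R)) {P : ℝ≥0∞} (hP : 1 ≤ P) (x : V) {ρ : ℝ} (hρ : 0 < ρ) :
    eLpNorm ((ball z R).indicator u) P μ[|ball x ρ] ≤ (⨍⁻ y in ball z R, ‖u y‖ₑ ∂μ) +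
      2 ^ Module.finrank ℝ V * eLpNorm ((ball z R).indicator
        (rieszPotential μ ((ball z R).indicator fun y => ‖fderiv ℝ u y‖ₑ))) P μ[|ball x ρ] := by
  have := isProbabilityMeasure_cond_ball μ x hρ
  set m := ⨍⁻ y in ball z R, ‖u y‖ₑ ∂μ
  set I := (ball z R).indicator
    (rieszPotential μ ((ball z R).indicator fun y => ‖fderiv ℝ u y‖ₑ))
  have hI : Measurable I := (measurable_rieszPotential
    (measurable_indicator_enorm_fderiv isOpen_ball hu)).indicator measurableSet_ball
  have pointwise (y : V) : ‖(ball z R).indicator u y‖ₑ ≤ m + 2 ^ Module.finrank ℝ V * I y := by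
    by_cases hy : y ∈ ball z R
    · simpa only [I, indicator_of_mem hy] using enorm_le_laverage_add_rieszPotential_fderiv hR hu hy
    · simp [hy]
  calc eLpNorm ((ball z R).indicator u) P μ[|ball x ρ]
      ≤ eLpNorm ((fun _ => m) + fun y => 2 ^ Module.finrank ℝ V * I y) P μ[|ball x ρ] :=
        eLpNorm_mono_enorm pointwise
    _ ≤ eLpNorm (fun _ => m) P μ[|ball x ρ] +
          eLpNorm (fun y => 2 ^ Module.finrank ℝ V * I y) P μ[|ball x ρ] :=
        eLpNorm_add_le aestronglyMeasurable_const (hI.const_mul _).aestronglyMeasurable hP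
    _ ≤ m + 2 ^ Module.finrank ℝ V * eLpNorm I P μ[|ball x ρ] := by
        gcongr
        · rw [eLpNorm_const _ (one_pos.trans_le hP).ne' (IsProbabilityMeasure.ne_zero _)]
          simp
        · exact eLpNorm_le_nnreal_smul_eLpNorm_of_ae_le_mul' (c := 2 ^ Module.finrank ℝ V)
            (ae_of_all _ fun y => by simp) P

theorem eLpNorm_indicator_ball_le_eMorreyNorm_fderiv_add (hp : 1 < p) (hν : 1 < ν) (hR : 0 < R)
    (hu : ContDiffOn ℝ 1 u (ball z R)) {x : V} (hx : x ∈ ball z R) {ρ : ℝ} (hρ : 0 < ρ)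
    (hρR : ρ ≤ 2 * R) :
    eLpNorm ((ball z R).indicator u) (ENNReal.ofReal (ν / (ν - 1) * p)) μ[|ball x ρ] ≤
      ENNReal.ofReal (ρ ^ (-(ν - 1))) *
        (ENNReal.ofReal (2 ^ Module.finrank ℝ V * adamsConst (Module.finrank ℝ V) p ν) *
          eMorreyNorm (fderiv ℝ u) (ENNReal.ofReal p) ν (ball z R) μ +
        ENNReal.ofReal (2 ^ (ν - 1) * R⁻¹) *
          eMorreyNorm u (ENNReal.ofReal p) ν (ball z R) μ) := by
  have hν₁ : 0 < ν - 1 := sub_pos.2 hν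
  have exponent_ge : 1 ≤ ν / (ν - 1) * p :=
    one_le_mul_of_one_le_of_one_le ((one_le_div hν₁).2 (by linarith)) hp.le
  have adams := eMorreyNorm_le_iff.1 (eMorreyNorm_rieszPotential_le (μ := μ)
    (measurable_indicator_enorm_fderiv isOpen_ball hu) measurableSet_ball hp hν) x hx ρ hρ
  have mean := laverage_ball_enorm_le_rpow_mul_eMorreyNorm (μ := μ) hp.le hν.le hR
    ((aestronglyMeasurable_indicator_iff measurableSet_ball).2
      (hu.continuousOn.aestronglyMeasurable measurableSet_ball)) hρ hρR
  refine (eLpNorm_indicator_ball_le_laverage_add_rieszPotential_fderiv hR hu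
    (ENNReal.one_le_ofReal.2 exponent_ge) x hρ).trans ?_
  grw [adams, mean]
  rw [eMorreyNorm_congr_enorm (g := fun y => ‖fderiv ℝ u y‖ₑ) (g' := fderiv ℝ u)
      fun _ _ => enorm_enorm _,
    ENNReal.ofReal_mul (p := 2 ^ Module.finrank ℝ V) (by positivity),
    ENNReal.ofReal_pow two_pos.le, ENNReal.ofReal_ofNat]
  exact le_of_eq (by ring)

theorem eMorreyNorm_ball_le_eMorreyNorm_fderiv_add (hp : 1 < p) (hν : 1 < ν)
    (hνp : ν ≤ Module.finrank ℝ V / p) (hR : 0 < R) (hu : ContDiffOn ℝ 1 u (ball z R)) {p' : ℝ}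
    (hp' : 0 < p') (hp'Q : p' ≤ ν / (ν - 1) * p) :
    eMorreyNorm u (ENNReal.ofReal p') (ν - 1) (ball z R) μ ≤
      ENNReal.ofReal (2 ^ Module.finrank ℝ V * adamsConst (Module.finrank ℝ V) p ν) *
          eMorreyNorm (fderiv ℝ u) (ENNReal.ofReal p) ν (ball z R) μ +
        ENNReal.ofReal (2 ^ (ν - 1) * R⁻¹) *
          eMorreyNorm u (ENNReal.ofReal p) ν (ball z R) μ := by
  have hν₁ : 0 < ν - 1 := sub_pos.2 hν
  have exponent_le : ν - 1 ≤ Module.finrank ℝ V / p' := by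
    rw [le_div_iff₀ hp']
    calc (ν - 1) * p' ≤ (ν - 1) * (ν / (ν - 1) * p) := by gcongr
      _ = ν * p := by field_simp
      _ ≤ Module.finrank ℝ V := (le_div_iff₀ (by linarith)).1 hνp
  refine eMorreyNorm_ball_le_of_forall_radius_le hp' exponent_le hR fun x hx ρ hρ hρR => ?_
  exact (eLpNorm_cond_ball_le_of_exponent_le (ENNReal.ofReal_le_ofReal hp'Q) x hρ
    ((aestronglyMeasurable_indicator_iff measurableSet_ball).2
      (hu.continuousOn.aestronglyMeasurable measurableSet_ball))).trans
    (eLpNorm_indicator_ball_le_eMorreyNorm_fderiv_add hp hν hR hu hx hρ hρR)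

end MorreyEmbedding

theorem stmt_11_general {V F : Type*} [NormedAddCommGroup V] [NormedSpace ℝ V]
    [FiniteDimensional ℝ V] [MeasurableSpace V] [BorelSpace V] [NormedAddCommGroup F]
    [NormedSpace ℝ F] (μ : Measure V) [μ.IsAddHaarMeasure] (p q : ℝ) (hp : 1 < p) (hpq : p < q)
    (hqd : q ≤ Module.finrank ℝ V) :
    ∃ N : ℝ, 0 < N ∧ ∀ (z : V) (R : ℝ), 0 < R → ∀ p' ∈ Ioc 0 (p * q / (q - p)), ∀ u : V → F,
      ContDiffOn ℝ 1 u (ball z R) →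
        eMorreyNorm u (ENNReal.ofReal p') (q / p - 1) (ball z R) μ ≤
          ENNReal.ofReal N * eMorreyNorm (fderiv ℝ u) (ENNReal.ofReal p) (q / p) (ball z R) μ +
            ENNReal.ofReal (N * R⁻¹) * eMorreyNorm u (ENNReal.ofReal p) (q / p) (ball z R) μ := by
  have hp₀ : 0 < p := one_pos.trans hp
  have hν : 1 < q / p := (one_lt_div hp₀).2 hpq
  have hC := adamsConst_pos (Module.finrank ℝ V) hp hν
  have exponent_eq : p * q / (q - p) = q / p / (q / p - 1) * p := by
    have := sub_pos.2 hpq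
    field_simp
  refine ⟨2 ^ Module.finrank ℝ V * adamsConst (Module.finrank ℝ V) p (q / p) + 2 ^ (q / p - 1),
    by positivity, fun z R hR p' hp' u hu => ?_⟩
  refine (eMorreyNorm_ball_le_eMorreyNorm_fderiv_add hp hν (by gcongr) hR hu hp'.1
    (exponent_eq ▸ hp'.2)).trans ?_
  gcongr
  · exact le_add_of_nonneg_right (by positivity)
  · exact le_add_of_nonneg_left (by positivity)

open scoped ProbabilityTheory in
theorem morrey_eq_eMorreyNorm {d : ℕ} {p : ℝ} (hp : 0 < p) (ν : ℝ) (Ω : Set (E d))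
    (g : E d → ℝ) : morrey p ν Ω g = eMorreyNorm g (ENNReal.ofReal p) ν Ω volume := by
  have nLp_eq_eLpNorm (B : Set (E d)) (h : E d → ℝ) :
      nLp p B h = eLpNorm h (ENNReal.ofReal p) volume[|B] := by
    rw [← ENNReal.rpow_rpow_inv hp.ne' (eLpNorm h _ _), eLpNorm_cond_rpow _ _ _ hp,
      setLAverage_eq, ENNReal.div_eq_inv_mul, nLp, one_div]
    simp only [Real.enorm_eq_ofReal_abs, ENNReal.ofReal_rpow_of_nonneg (abs_nonneg _) hp.le]
  simp only [morrey, eMorreyNorm, nLp_eq_eLpNorm]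

/-- Lemma 4.7 of the paper: Morrey-space embedding based on Adams' theorem. -/
theorem stmt_11 (d : ℕ) (hd : 1 ≤ d) (p q : ℝ)
    (hp : 1 < p) (hpq : p < q) (hqd : q < d) :
    ∃ N : ℝ, 0 < N ∧
      ∀ R : ℝ, 0 < R →
        ∀ p' : ℝ, p' ∈ Set.Icc 1 (p * q / (q - p)) →
          ∀ u : E d → ℝ, ContDiffOn ℝ 1 u (closedBall (0 : E d) R) →
            morrey p' (q / p - 1) (ball (0 : E d) R) u ≤
              ENNReal.ofReal N *
                  morrey p (q / p) (ball (0 : E d) R) (fun x => ‖fderiv ℝ u x‖) +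
                ENNReal.ofReal (N * R⁻¹) * morrey p (q / p) (ball (0 : E d) R) u := by
  obtain ⟨N, hN, bound⟩ := stmt_11_general (F := ℝ) (volume : Measure (E d)) p q hp hpq (by
    simpa using hqd.le)
  refine ⟨N, hN, fun R hR p' hp' u hu => ?_⟩
  have hp'₀ : 0 < p' := one_pos.trans_le hp'.1
  simp only [morrey_eq_eMorreyNorm hp'₀, morrey_eq_eMorreyNorm (one_pos.trans hp)]
  rw [eMorreyNorm_congr_enorm (g := fun x => ‖fderiv ℝ u x‖) (g' := fderiv ℝ u)
    fun _ _ => enorm_norm _]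
  exact bound 0 R hR p' ⟨hp'₀, hp'.2⟩ u (hu.mono ball_subset_closedBall)
end
end

section
/- Let d ≥ 1 be an integer, 1 < p < q < d, R ∈ (0,∞), and set μ = q/p. Let b : B_R → [0,∞) be measurable with ‖b‖_{E_{q,1}(B_R)} < ∞. Then there are constants N = N(d,p,μ) such that for every function u that is twice continuously differentiable on B̄_R: ‖b·|Du|‖_{E_{p,μ}(B_R)} ≤ N ‖b‖_{E_{q,1}(B_R)} ( ‖D²u‖_{E_{p,μ}(B_R)} + R^{−1} ‖Du‖_{E_{p,μ}(B_R)} ) and ‖b·|Du|‖_{E_{p,μ}(B_R)} ≤ N ‖b‖_{E_{q,1}(B_R)} ( ‖D²u‖_{E_{p,μ}(B_R)} + R^{−2} ‖u‖_{E_{p,μ}(B_R)} ). -/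
open MeasureTheory Metric Set Filter
open scoped ENNReal RealInnerProductSpace

noncomputable section

/-!
With `μ = q / p` and `r = p q / (q - p)`, Hölder's inequality bounds the Morrey norm of `b |Du|` by
that of `b` times the `E_{r, μ-1}` norm of `Du`, so a Sobolev-type embedding of Morrey spaces is
needed. For `y ∈ B_R` the average over `B_R` of `|Du - Du(y)|` is at most a constant times
`∫₀^∞ ⨍_{B_t(y)} |D²u| 1_{B_R} dt`. The inner average is bounded both by the maximal function of
`|D²u|` at `y` and by `t^{-μ} ‖D²u‖_{E_{p,μ}}`; splitting the integral at the optimal `t` (Hedberg's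
trick) gives `(M |D²u|)^{1-1/μ} ‖D²u‖^{1/μ}`. Since `(1 - 1/μ) r = p`, the maximal theorem in
`E_{p,μ}` bounds the `E_{r, μ-1}` norm of the oscillation, and it remains to add the average of
`|Du|`. For the second estimate that average is avoided: difference quotients at scale `R / 2`
control `|Du(y)|` by the oscillation of `Du` and `R⁻¹` times the average of `|u|`.
-/

open scoped NNReal

section LayerCake

theorem lintegral_Ioo_rpow_sub_one {s a : ℝ} (hs : 0 < s) (ha : 0 ≤ a) :
    ∫⁻ t in Ioo 0 a, ENNReal.ofReal (t ^ (s - 1)) = ENNReal.ofReal (a ^ s / s) := by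
  have integrable : IntervalIntegrable (fun t : ℝ => t ^ (s - 1)) volume 0 a :=
    intervalIntegral.intervalIntegrable_rpow' (by linarith)
  rw [Measure.restrict_congr_set Ioo_ae_eq_Ioc, ← ofReal_integral_eq_lintegral_ofReal,
    ← intervalIntegral.integral_of_le ha, integral_rpow (Or.inl (by linarith)), sub_add_cancel,
    Real.zero_rpow hs.ne', sub_zero]
  · exact (intervalIntegrable_iff_integrableOn_Ioc_of_le ha).1 integrable
  · filter_upwards [ae_restrict_mem measurableSet_Ioc] with t ht
    exact Real.rpow_nonneg ht.1.le _

theorem lintegral_Ioi_rpow (s : ℝ) : ∫⁻ t in Ioi (0 : ℝ), ENNReal.ofReal (t ^ s) = ⊤ := by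
  by_contra h
  refine not_integrableOn_Ioi_rpow s ((lintegral_ofReal_ne_top_iff_integrable ?_ ?_).1 h)
  · fun_prop
  · filter_upwards [ae_restrict_mem measurableSet_Ioi] with t ht
    exact Real.rpow_nonneg (le_of_lt ht) s

theorem rpow_eq_lintegral_indicator_ofReal_lt {s : ℝ} (hs : 0 < s) (a : ℝ≥0∞) :
    a ^ s = ENNReal.ofReal s * ∫⁻ t in Ioi (0 : ℝ),
      {t | ENNReal.ofReal t < a}.indicator (fun t => ENNReal.ofReal (t ^ (s - 1))) t := by
  have hmeas : MeasurableSet {t | ENNReal.ofReal t < a} :=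
    measurableSet_lt ENNReal.measurable_ofReal measurable_const
  rw [setLIntegral_indicator hmeas]
  cases a with
  | top =>
    simp [hs, lintegral_Ioi_rpow]
  | coe a =>
    have level : {t | ENNReal.ofReal t < a} ∩ Ioi 0 = Ioo 0 (a : ℝ) := by
      ext t
      simp only [mem_inter_iff, mem_ofPred_eq, mem_Ioi, mem_Ioo, and_comm (b := 0 < t)]
      refine and_congr_right fun ht => ?_
      rw [← ENNReal.ofReal_coe_nnreal, ENNReal.ofReal_lt_ofReal_iff_of_nonneg ht.le]
    rw [level, lintegral_Ioo_rpow_sub_one hs a.coe_nonneg, ← ENNReal.ofReal_mul hs.le,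
      mul_div_cancel₀ _ hs.ne', ← ENNReal.ofReal_rpow_of_nonneg a.coe_nonneg hs.le,
      ENNReal.ofReal_coe_nnreal]

variable {α : Type*} [MeasurableSpace α] {ν : Measure α} [SFinite ν]

theorem lintegral_rpow_eq_lintegral_meas_ofReal_lt {s : ℝ} (hs : 0 < s) {f : α → ℝ≥0∞}
    (hf : Measurable f) :
    ∫⁻ x, f x ^ s ∂ν = ENNReal.ofReal s *
      ∫⁻ t in Ioi (0 : ℝ), ENNReal.ofReal (t ^ (s - 1)) * ν {x | ENNReal.ofReal t < f x} := by
  have hmeas : MeasurableSet {z : α × ℝ | ENNReal.ofReal z.2 < f z.1} :=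
    measurableSet_lt (by fun_prop) (by fun_prop)
  set K : α × ℝ → ℝ≥0∞ := {z | ENNReal.ofReal z.2 < f z.1}.indicator
    fun z => ENNReal.ofReal (z.2 ^ (s - 1))
  have K_meas : Measurable K := Measurable.indicator (by fun_prop) hmeas
  calc ∫⁻ x, f x ^ s ∂ν
      = ∫⁻ x, (ENNReal.ofReal s * ∫⁻ t in Ioi (0 : ℝ), K (x, t)) ∂ν :=
        lintegral_congr fun x => rpow_eq_lintegral_indicator_ofReal_lt hs (f x)
    _ = ENNReal.ofReal s * ∫⁻ t in Ioi (0 : ℝ), (∫⁻ x, K (x, t) ∂ν) := by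
        rw [lintegral_const_mul _ K_meas.lintegral_prod_right',
          lintegral_lintegral_swap (f := fun x t => K (x, t)) K_meas.aemeasurable]
    _ = _ := by
        congr! with t
        exact lintegral_indicator_const (s := {x | ENNReal.ofReal t < f x})
          (measurableSet_lt measurable_const hf) (ENNReal.ofReal (t ^ (s - 1)))

/-- Doob's way of turning a weak-type inequality into a strong one. -/
theorem lintegral_rpow_le_of_forall_mul_meas_ofReal_lt_le {p : ℝ} (hp : 1 < p)
    {f g h : α → ℝ≥0∞} (hf : Measurable f) (hg : Measurable g) (hh : Measurable h) (C : ℝ≥0)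
    (weak : ∀ t : ℝ, 0 < t → ENNReal.ofReal t * ν {x | ENNReal.ofReal t < f x} ≤
      C * ∫⁻ x in {x | ENNReal.ofReal t < h x}, g x ∂ν) :
    ∫⁻ x, f x ^ p ∂ν ≤ C * ENNReal.ofReal (p / (p - 1)) * ∫⁻ x, g x * h x ^ (p - 1) ∂ν := by
  have hp' : 0 < p - 1 := by linarith
  have integrand_le : ∀ t ∈ Ioi (0 : ℝ),
      ENNReal.ofReal (t ^ (p - 1)) * ν {x | ENNReal.ofReal t < f x} ≤
        C * (ENNReal.ofReal (t ^ (p - 1 - 1)) *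
          ν.withDensity g {x | ENNReal.ofReal t < h x}) := by
    intro t ht
    calc ENNReal.ofReal (t ^ (p - 1)) * ν {x | ENNReal.ofReal t < f x}
        = ENNReal.ofReal (t ^ (p - 1 - 1)) *
            (ENNReal.ofReal t * ν {x | ENNReal.ofReal t < f x}) := by
          rw [← mul_assoc, ← ENNReal.ofReal_mul (Real.rpow_nonneg (le_of_lt ht) _),
            ← Real.rpow_add_one (ne_of_gt ht), sub_add_cancel]
      _ ≤ ENNReal.ofReal (t ^ (p - 1 - 1)) * (C * ∫⁻ x in {x | ENNReal.ofReal t < h x}, g x ∂ν) :=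
          mul_le_mul_right (weak t ht) _
      _ = C * (ENNReal.ofReal (t ^ (p - 1 - 1)) * ν.withDensity g {x | ENNReal.ofReal t < h x}) :=
          by rw [withDensity_apply', mul_left_comm]
  calc ∫⁻ x, f x ^ p ∂ν
      ≤ ENNReal.ofReal p * ∫⁻ t in Ioi (0 : ℝ), C * (ENNReal.ofReal (t ^ (p - 1 - 1)) *
          ν.withDensity g {x | ENNReal.ofReal t < h x}) := by
        rw [lintegral_rpow_eq_lintegral_meas_ofReal_lt (by linarith) hf]
        gcongr ENNReal.ofReal p * ?_
        exact setLIntegral_mono' measurableSet_Ioi integrand_le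
    _ = C * ENNReal.ofReal (p / (p - 1)) * (ENNReal.ofReal (p - 1) *
          ∫⁻ t in Ioi (0 : ℝ), ENNReal.ofReal (t ^ (p - 1 - 1)) *
            ν.withDensity g {x | ENNReal.ofReal t < h x}) := by
        rw [lintegral_const_mul' _ _ ENNReal.coe_ne_top, mul_left_comm, mul_assoc,
          ← mul_assoc (ENNReal.ofReal (p / _)), ← ENNReal.ofReal_mul (by positivity),
          div_mul_cancel₀ _ hp'.ne']
    _ = C * ENNReal.ofReal (p / (p - 1)) * ∫⁻ x, g x * h x ^ (p - 1) ∂ν := by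
        rw [← lintegral_rpow_eq_lintegral_meas_ofReal_lt hp' hh,
          lintegral_withDensity_eq_lintegral_mul _ hg (hh.pow_const _)]
        simp only [Pi.mul_apply]

end LayerCake

section MaximalFunction

variable {X : Type*} [PseudoMetricSpace X] [MeasurableSpace X] (ν : Measure X)

/-- The centred Hardy–Littlewood maximal function of `g` with respect to `ν`, the supremum of the
averages of `g` over all balls centred at `x`. -/
def maximalFunction (g : X → ℝ≥0∞) (x : X) : ℝ≥0∞ :=
  ⨆ (r : ℝ) (_ : 0 < r), ⨍⁻ y in ball x r, g y ∂ν

theorem laverage_ball_le_maximalFunction (g : X → ℝ≥0∞) (x : X) {r : ℝ} (hr : 0 < r) :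
    ⨍⁻ y in ball x r, g y ∂ν ≤ maximalFunction ν g x :=
  le_iSup₂ (f := fun r (_ : 0 < r) => ⨍⁻ y in ball x r, g y ∂ν) r hr

theorem laverage_ball_const [ProperSpace X] [ν.IsOpenPosMeasure] [IsFiniteMeasureOnCompacts ν]
    (x : X) {r : ℝ} (hr : 0 < r) (c : ℝ≥0∞) : ⨍⁻ _ in ball x r, c ∂ν = c :=
  setLAverage_const (measure_ball_pos ν x hr).ne' measure_ball_lt_top.ne c

theorem maximalFunction_le_add_const [ProperSpace X] [ν.IsOpenPosMeasure]
    [IsFiniteMeasureOnCompacts ν] {g h : X → ℝ≥0∞} {c : ℝ≥0∞} (hgh : ∀ y, g y ≤ h y + c) (x : X) :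
    maximalFunction ν g x ≤ maximalFunction ν h x + c := by
  refine iSup₂_le fun r hr => ?_
  calc ⨍⁻ y in ball x r, g y ∂ν ≤ ⨍⁻ y in ball x r, (h y + c) ∂ν :=
        laverage_mono_ae (.of_forall hgh)
    _ = (⨍⁻ y in ball x r, h y ∂ν) + ⨍⁻ _ in ball x r, c ∂ν := by
        simp only [laverage_eq', lintegral_add_right _ measurable_const]
    _ ≤ maximalFunction ν h x + c := by
        rw [laverage_ball_const ν x hr]
        gcongr
        exact laverage_ball_le_maximalFunction ν h x hr

theorem lowerSemicontinuous_setLIntegral_ball [OpensMeasurableSpace X] (g : X → ℝ≥0∞) (r : ℝ) :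
    LowerSemicontinuous fun x => ∫⁻ y in ball x r, g y ∂ν := by
  intro x c hc
  obtain ⟨s, s_mono, s_lt, s_tendsto⟩ := exists_seq_strictMono_tendsto r
  have ball_eq : ball x r = ⋃ n, ball x (s n) := by
    ext y
    simp only [mem_ball, mem_iUnion]
    exact ⟨fun h => (s_tendsto.eventually (lt_mem_nhds h)).exists,
      fun ⟨n, h⟩ => h.trans (s_lt n)⟩
  have directed : Directed (· ⊆ ·) fun n => ball x (s n) :=
    directed_of_isDirected_le fun m n h => ball_subset_ball (s_mono.monotone h)
  simp only [ball_eq, setLIntegral_iUnion_of_directed _ directed] at hc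
  obtain ⟨n, hn⟩ := lt_iSup_iff.1 hc
  filter_upwards [ball_mem_nhds x (sub_pos.2 (s_lt n))] with y hy
  refine hn.trans_le (lintegral_mono_set (ball_subset_ball' ?_))
  rw [mem_ball'] at hy
  linarith

theorem measurable_maximalFunction {V : Type*} [NormedAddCommGroup V] [MeasurableSpace V]
    [BorelSpace V] (ν : Measure V) [ν.IsAddHaarMeasure] (g : V → ℝ≥0∞) :
    Measurable (maximalFunction ν g) := by
  refine (lowerSemicontinuous_biSup fun r hr => ?_).measurable
  simp only [setLAverage_eq, ENNReal.div_eq_inv_mul, Measure.addHaar_ball_center]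
  exact (ENNReal.continuous_const_mul (ENNReal.inv_ne_top.2 (measure_ball_pos ν 0 hr).ne'))
    |>.comp_lowerSemicontinuous (lowerSemicontinuous_setLIntegral_ball ν g r)
      fun _ _ h => mul_le_mul_right h _

variable {V : Type*} [NormedAddCommGroup V] [NormedSpace ℝ V] [FiniteDimensional ℝ V]
  [MeasurableSpace V] [BorelSpace V] (ν : Measure V) [ν.IsAddHaarMeasure]

theorem mul_meas_lt_laverage_ball_le (g : V → ℝ≥0∞) (l : ℝ≥0∞) (R : ℝ) :
    l * ν {x | ∃ r ∈ Ioc 0 R, l < ⨍⁻ y in ball x r, g y ∂ν} ≤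
      ENNReal.ofReal (4 ^ Module.finrank ℝ V) * ∫⁻ y, g y ∂ν := by
  set S := {x | ∃ r ∈ Ioc 0 R, l < ⨍⁻ y in ball x r, g y ∂ν}
  have exists_radius : ∀ x ∈ S, ∃ r, 0 < r ∧ r ≤ R ∧ l < ⨍⁻ y in ball x r, g y ∂ν :=
    fun _ ⟨r, hr, h⟩ => ⟨r, hr.1, hr.2, h⟩
  choose! r r_pos r_le lt_laverage using exists_radius
  have mul_meas_ball_le : ∀ x ∈ S, l * ν (ball x (r x)) ≤ ∫⁻ y in ball x (r x), g y ∂ν := by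
    intro x hx
    rw [← measure_mul_setLAverage g measure_ball_lt_top.ne, mul_comm]
    gcongr
    exact (lt_laverage x hx).le
  obtain ⟨u, u_sub, u_disj, u_cover⟩ :=
    Vitali.exists_disjoint_subfamily_covering_enlargement_ball S id r R r_le 4 (by norm_num)
  simp only [id_eq] at u_disj u_cover
  have u_countable : u.Countable := u_disj.countable_of_isOpen (fun _ _ => isOpen_ball)
    fun x hx => nonempty_ball.2 (r_pos x (u_sub hx))
  have cover : S ⊆ ⋃ x ∈ u, ball x (4 * r x) := by
    intro x hx
    obtain ⟨y, hy, hxy⟩ := u_cover x hx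
    exact mem_biUnion hy (hxy (mem_ball_self (r_pos x hx)))
  have _ := u_countable.to_subtype
  calc l * ν S ≤ l * ∑' x : u, ν (ball (x : V) (4 * r x)) := by
        gcongr
        exact (measure_mono cover).trans (measure_biUnion_le _ u_countable _)
    _ = ENNReal.ofReal (4 ^ Module.finrank ℝ V) * ∑' x : u, l * ν (ball (x : V) (r x)) := by
        simp only [← ENNReal.tsum_mul_left, mul_left_comm l,
          Measure.addHaar_ball_mul_of_pos ν _ (zero_lt_four' ℝ), Measure.addHaar_ball_center]
    _ ≤ ENNReal.ofReal (4 ^ Module.finrank ℝ V) *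
          ∑' x : u, ∫⁻ y in ball (x : V) (r x), g y ∂ν := by
        gcongr with x
        exact mul_meas_ball_le x (u_sub x.2)
    _ = ENNReal.ofReal (4 ^ Module.finrank ℝ V) * ∫⁻ y in ⋃ x ∈ u, ball x (r x), g y ∂ν := by
        rw [lintegral_biUnion u_countable (fun _ _ => measurableSet_ball) u_disj]
    _ ≤ _ := mul_le_mul_right (setLIntegral_le_lintegral _ _) _

theorem mul_meas_lt_maximalFunction_le (g : V → ℝ≥0∞) (l : ℝ≥0∞) :
    l * ν {x | l < maximalFunction ν g x} ≤
      ENNReal.ofReal (4 ^ Module.finrank ℝ V) * ∫⁻ y, g y ∂ν := by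
  have exhaust : {x | l < maximalFunction ν g x} =
      ⋃ n : ℕ, {x | ∃ r ∈ Ioc 0 (n : ℝ), l < ⨍⁻ y in ball x r, g y ∂ν} := by
    ext x
    simp only [maximalFunction, lt_iSup_iff, mem_iUnion, mem_ofPred_eq, mem_Ioc]
    refine ⟨fun ⟨r, hr, h⟩ => ?_, fun ⟨_, r, hr, h⟩ => ⟨r, hr.1, h⟩⟩
    obtain ⟨n, hn⟩ := exists_nat_ge r
    exact ⟨n, r, ⟨hr, hn⟩, h⟩
  have mono : Monotone fun n : ℕ => {x | ∃ r ∈ Ioc 0 (n : ℝ), l < ⨍⁻ y in ball x r, g y ∂ν} :=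
    fun m n hmn _ ⟨r, hr, h⟩ => ⟨r, ⟨hr.1, hr.2.trans (by exact_mod_cast hmn)⟩, h⟩
  rw [exhaust, mono.measure_iUnion, ENNReal.mul_iSup]
  exact iSup_le fun n => mul_meas_lt_laverage_ball_le ν g l n

theorem mul_meas_lt_maximalFunction_le_setLIntegral {g : V → ℝ≥0∞} (hg : Measurable g)
    (t : ℝ≥0∞) :
    t * ν {x | t < maximalFunction ν g x} ≤
      ↑(2 * 4 ^ Module.finrank ℝ V : ℝ≥0) * ∫⁻ x in {x | t < 2 * g x}, g x ∂ν := by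
  set A := {x | t < 2 * g x}
  have truncate : ∀ y, g y ≤ A.indicator g y + t / 2 := by
    intro y
    by_cases hy : y ∈ A
    · simp [hy]
    · have : 2 * g y ≤ t := not_lt.1 hy
      simpa [hy] using (ENNReal.le_div_iff_mul_le (by simp) (by simp)).2 (mul_comm 2 (g y) ▸ this)
  have level_subset : {x | t < maximalFunction ν g x} ⊆
      {x | t / 2 < maximalFunction ν (A.indicator g) x} := by
    intro x hx
    have : t / 2 + t / 2 < maximalFunction ν (A.indicator g) x + t / 2 :=
      (ENNReal.add_halves t).symm ▸ hx.trans_le (maximalFunction_le_add_const ν truncate x)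
    exact lt_of_add_lt_add_right this
  calc t * ν {x | t < maximalFunction ν g x}
      ≤ 2 * (t / 2 * ν {x | t / 2 < maximalFunction ν (A.indicator g) x}) := by
        rw [← mul_assoc, ENNReal.mul_div_cancel two_ne_zero ENNReal.ofNat_ne_top]
        gcongr
    _ ≤ 2 * (ENNReal.ofReal (4 ^ Module.finrank ℝ V) * ∫⁻ x, A.indicator g x ∂ν) :=
        mul_le_mul_right (mul_meas_lt_maximalFunction_le ν _ _) _
    _ = ↑(2 * 4 ^ Module.finrank ℝ V : ℝ≥0) * ∫⁻ x in A, g x ∂ν := by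
        rw [lintegral_indicator (measurableSet_lt measurable_const (hg.const_mul 2)), ← mul_assoc]
        simp [A, ENNReal.ofReal_pow]

theorem exists_lintegral_maximalFunction_rpow_le {p : ℝ} (hp : 1 < p) :
    ∃ C : ℝ≥0, ∀ g : V → ℝ≥0∞, Measurable g →
      ∫⁻ x, maximalFunction ν g x ^ p ∂ν ≤ C * ∫⁻ x, g x ^ p ∂ν := by
  refine ⟨2 * 4 ^ Module.finrank ℝ V * (p / (p - 1)).toNNReal * 2 ^ (p - 1), fun g hg => ?_⟩
  have g_mul : ∀ x, g x * (2 * g x) ^ (p - 1) = 2 ^ (p - 1) * g x ^ p := by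
    intro x
    rw [ENNReal.mul_rpow_of_nonneg _ _ (by linarith), mul_left_comm]
    nth_rw 1 [← ENNReal.rpow_one (g x)]
    rw [← ENNReal.rpow_add_of_nonneg _ _ zero_le_one (by linarith), add_sub_cancel]
  refine (lintegral_rpow_le_of_forall_mul_meas_ofReal_lt_le hp (measurable_maximalFunction ν g) hg
    (hg.const_mul 2) _
    fun t _ => mul_meas_lt_maximalFunction_le_setLIntegral ν hg (ENNReal.ofReal t)).trans_eq ?_
  simp only [g_mul]
  rw [lintegral_const_mul _ (hg.pow_const p), ← mul_assoc]
  push_cast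
  rw [ENNReal.coe_rpow_of_nonneg _ (by linarith)]
  rfl

end MaximalFunction

section Morrey

variable {X : Type*} [PseudoMetricSpace X] [MeasurableSpace X] {ν : Measure X}

/-- The Morrey norm `sup_{ρ > 0, x ∈ Ω} ρ^μ (⨍_{B_ρ(x)} |g 1_Ω|^p dν)^{1/p}` of a nonnegative
function `g`, on any metric measure space. -/
def morreyNorm (ν : Measure X) (p μ : ℝ) (Ω : Set X) (g : X → ℝ≥0∞) : ℝ≥0∞ :=
  ⨆ (ρ : ℝ) (_ : 0 < ρ) (x : X) (_ : x ∈ Ω),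
    ENNReal.ofReal (ρ ^ μ) * (⨍⁻ y in ball x ρ, Ω.indicator g y ^ p ∂ν) ^ (1 / p)

variable {p q r μ μ₁ μ₂ ρ : ℝ} {Ω : Set X} {f g : X → ℝ≥0∞} {x : X}

theorem le_morreyNorm (hρ : 0 < ρ) (hx : x ∈ Ω) :
    ENNReal.ofReal (ρ ^ μ) * (⨍⁻ y in ball x ρ, Ω.indicator g y ^ p ∂ν) ^ (1 / p) ≤
      morreyNorm ν p μ Ω g :=
  le_iSup₂_of_le (f := fun ρ (_ : 0 < ρ) => ⨆ (x : X) (_ : x ∈ Ω), ENNReal.ofReal (ρ ^ μ) *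
    (⨍⁻ y in ball x ρ, Ω.indicator g y ^ p ∂ν) ^ (1 / p)) ρ hρ (le_iSup₂_of_le x hx le_rfl)

theorem morreyNorm_le {M : ℝ≥0∞} (h : ∀ ρ > 0, ∀ x ∈ Ω,
    ENNReal.ofReal (ρ ^ μ) * (⨍⁻ y in ball x ρ, Ω.indicator g y ^ p ∂ν) ^ (1 / p) ≤ M) :
    morreyNorm ν p μ Ω g ≤ M :=
  iSup₂_le fun ρ hρ => iSup₂_le fun x hx => h ρ hρ x hx

theorem ofReal_rpow_neg_mul_cancel (hρ : 0 < ρ) (μ : ℝ) (a : ℝ≥0∞) :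
    ENNReal.ofReal (ρ ^ (-μ)) * (ENNReal.ofReal (ρ ^ μ) * a) = a := by
  rw [← mul_assoc, ← ENNReal.ofReal_mul (Real.rpow_nonneg hρ.le _), ← Real.rpow_add hρ,
    neg_add_cancel, Real.rpow_zero, ENNReal.ofReal_one, one_mul]

theorem laverage_indicator_rpow_le_morreyNorm (hρ : 0 < ρ) (hx : x ∈ Ω) :
    (⨍⁻ y in ball x ρ, Ω.indicator g y ^ p ∂ν) ^ (1 / p) ≤
      ENNReal.ofReal (ρ ^ (-μ)) * morreyNorm ν p μ Ω g := by
  rw [← ofReal_rpow_neg_mul_cancel hρ μ (_ ^ (1 / p))]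
  exact mul_le_mul_right (le_morreyNorm hρ hx) _

theorem morreyNorm_mono (hp : 0 ≤ p) (hfg : ∀ x ∈ Ω, f x ≤ g x) :
    morreyNorm ν p μ Ω f ≤ morreyNorm ν p μ Ω g := by
  refine morreyNorm_le fun ρ hρ x hx => le_trans ?_ (le_morreyNorm hρ hx)
  gcongr
  exact .of_forall fun y => ENNReal.rpow_le_rpow (indicator_le_indicator' (hfg y)) hp

theorem morreyNorm_const_mul (hp : 0 < p) (hg : Measurable (Ω.indicator g)) (c : ℝ≥0∞) :
    morreyNorm ν p μ Ω (fun x => c * g x) = c * morreyNorm ν p μ Ω g := by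
  simp only [morreyNorm, ENNReal.mul_iSup, indicator_const_mul,
    ENNReal.mul_rpow_of_nonneg _ _ hp.le, laverage_eq', lintegral_const_mul _ (hg.pow_const p),
    ENNReal.mul_rpow_of_nonneg _ _ (one_div_nonneg.2 hp.le), ← ENNReal.rpow_mul,
    mul_one_div_cancel hp.ne', ENNReal.rpow_one, mul_left_comm]

theorem morreyNorm_add_le (hp : 1 ≤ p) (hf : Measurable (Ω.indicator f))
    (hg : Measurable (Ω.indicator g)) :
    morreyNorm ν p μ Ω (fun x => f x + g x) ≤ morreyNorm ν p μ Ω f + morreyNorm ν p μ Ω g := by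
  refine morreyNorm_le fun ρ hρ x hx => ?_
  calc ENNReal.ofReal (ρ ^ μ) *
        (⨍⁻ y in ball x ρ, Ω.indicator (fun y => f y + g y) y ^ p ∂ν) ^ (1 / p)
      ≤ ENNReal.ofReal (ρ ^ μ) * ((⨍⁻ y in ball x ρ, Ω.indicator f y ^ p ∂ν) ^ (1 / p) +
          (⨍⁻ y in ball x ρ, Ω.indicator g y ^ p ∂ν) ^ (1 / p)) := by
        gcongr
        simp only [indicator_add]
        exact ENNReal.lintegral_Lp_add_le hf.aemeasurable hg.aemeasurable hp
    _ ≤ morreyNorm ν p μ Ω f + morreyNorm ν p μ Ω g := by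
        rw [mul_add]
        exact add_le_add (le_morreyNorm hρ hx) (le_morreyNorm hρ hx)

theorem morreyNorm_mul_le (hp : 0 < p) (hpq : p < q) (hpqr : 1 / p = 1 / q + 1 / r)
    (hf : Measurable (Ω.indicator f)) (hg : Measurable (Ω.indicator g)) :
    morreyNorm ν p (μ₁ + μ₂) Ω (fun x => f x * g x) ≤
      morreyNorm ν q μ₁ Ω f * morreyNorm ν r μ₂ Ω g := by
  refine morreyNorm_le fun ρ hρ x hx => ?_
  calc ENNReal.ofReal (ρ ^ (μ₁ + μ₂)) *
        (⨍⁻ y in ball x ρ, Ω.indicator (fun y => f y * g y) y ^ p ∂ν) ^ (1 / p)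
      ≤ ENNReal.ofReal (ρ ^ (μ₁ + μ₂)) *
          ((⨍⁻ y in ball x ρ, Ω.indicator f y ^ q ∂ν) ^ (1 / q) *
            (⨍⁻ y in ball x ρ, Ω.indicator g y ^ r ∂ν) ^ (1 / r)) := by
        gcongr
        simp only [indicator_mul]
        exact ENNReal.lintegral_Lp_mul_le_Lq_mul_Lr hp hpq hpqr _ hf.aemeasurable hg.aemeasurable
    _ ≤ morreyNorm ν q μ₁ Ω f * morreyNorm ν r μ₂ Ω g := by
        rw [Real.rpow_add hρ, ENNReal.ofReal_mul (Real.rpow_nonneg hρ.le _), mul_mul_mul_comm]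
        exact mul_le_mul' (le_morreyNorm hρ hx) (le_morreyNorm hρ hx)

theorem morreyNorm_rpow_le (hr : 0 < r) {θ : ℝ} (hθ : 0 < θ) :
    morreyNorm ν r (θ * μ) Ω (fun x => g x ^ θ) ≤ morreyNorm ν (θ * r) μ Ω g ^ θ := by
  refine morreyNorm_le fun ρ hρ x hx => ?_
  have indicator_rpow : ∀ y, Ω.indicator (fun y => g y ^ θ) y ^ r = Ω.indicator g y ^ (θ * r) := by
    intro y
    by_cases hy : y ∈ Ω
    · simp [hy, ENNReal.rpow_mul]
    · simp [hy, hr, hθ]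
  simp only [indicator_rpow]
  calc ENNReal.ofReal (ρ ^ (θ * μ)) *
        (⨍⁻ y in ball x ρ, Ω.indicator g y ^ (θ * r) ∂ν) ^ (1 / r)
      = (ENNReal.ofReal (ρ ^ μ) *
          (⨍⁻ y in ball x ρ, Ω.indicator g y ^ (θ * r) ∂ν) ^ (1 / (θ * r))) ^ θ := by
        rw [ENNReal.mul_rpow_of_nonneg _ _ hθ.le, ← ENNReal.rpow_mul,
          ENNReal.ofReal_rpow_of_nonneg (Real.rpow_nonneg hρ.le _) hθ.le, ← Real.rpow_mul hρ.le,
          mul_comm θ μ]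
        congr 2
        field_simp
    _ ≤ morreyNorm ν (θ * r) μ Ω g ^ θ := by
        gcongr
        exact le_morreyNorm hρ hx

theorem laverage_le_rpow_laverage_rpow {α : Type*} [MeasurableSpace α] (κ : Measure α)
    {f : α → ℝ≥0∞} (hp : 1 < p) (hf : AEMeasurable f κ) :
    ⨍⁻ a, f a ∂κ ≤ (⨍⁻ a, f a ^ p ∂κ) ^ (1 / p) := by
  have conj := Real.HolderConjugate.conjExponent hp
  have mass_le : ((κ univ)⁻¹ • κ) univ ≤ 1 := ENNReal.inv_mul_le_one _
  calc ⨍⁻ a, f a ∂κ = ∫⁻ a, (f * 1) a ∂((κ univ)⁻¹ • κ) := by simp [laverage_eq']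
    _ ≤ (⨍⁻ a, f a ^ p ∂κ) ^ (1 / p) * (((κ univ)⁻¹ • κ) univ) ^ (1 / p.conjExponent) := by
        simpa [laverage_eq'] using ENNReal.lintegral_mul_le_Lp_mul_Lq ((κ univ)⁻¹ • κ) conj
          (hf.mono_ac Measure.smul_absolutelyContinuous) aemeasurable_one
    _ ≤ (⨍⁻ a, f a ^ p ∂κ) ^ (1 / p) :=
        mul_le_of_le_one_right' (ENNReal.rpow_le_one mass_le (one_div_nonneg.2 conj.symm.nonneg))

theorem laverage_indicator_le_morreyNorm (hp : 1 < p) (hg : Measurable (Ω.indicator g))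
    (hρ : 0 < ρ) (hx : x ∈ Ω) :
    ⨍⁻ y in ball x ρ, Ω.indicator g y ∂ν ≤ ENNReal.ofReal (ρ ^ (-μ)) * morreyNorm ν p μ Ω g :=
  (laverage_le_rpow_laverage_rpow _ hp hg.aemeasurable).trans
    (laverage_indicator_rpow_le_morreyNorm hρ hx)

theorem laverage_ball_le_morreyNorm [OpensMeasurableSpace X] (hp : 1 < p)
    (hg : Measurable ((ball x ρ).indicator g)) (hρ : 0 < ρ) :
    ⨍⁻ y in ball x ρ, g y ∂ν ≤ ENNReal.ofReal (ρ ^ (-μ)) * morreyNorm ν p μ (ball x ρ) g := by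
  rw [← setLAverage_congr_fun (f := (ball x ρ).indicator g) measurableSet_ball
    fun z hz => indicator_of_mem hz _]
  exact laverage_indicator_le_morreyNorm hp hg hρ (mem_ball_self hρ)

theorem maximalFunction_indicator_le [OpensMeasurableSpace X] (hp : 1 < p) (hμ : 0 ≤ μ)
    (hρ : 0 < ρ) (hg : Measurable (Ω.indicator g)) {y : X} (hy : y ∈ Ω) (hxy : y ∈ ball x ρ) :
    maximalFunction ν (Ω.indicator g) y ≤
      maximalFunction ν ((ball x (2 * ρ)).indicator (Ω.indicator g)) y +
        ENNReal.ofReal (ρ ^ (-μ)) * morreyNorm ν p μ Ω g := by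
  refine iSup₂_le fun r hr => ?_
  rcases le_or_gt r ρ with hrρ | hρr
  · refine le_add_of_le_of_nonneg ?_ zero_le
    have ball_sub : ball y r ⊆ ball x (2 * ρ) :=
      ball_subset_ball' (by linarith [mem_ball.1 hxy])
    rw [← setLAverage_congr_fun (f := (ball x (2 * ρ)).indicator (Ω.indicator g))
      measurableSet_ball fun z hz => indicator_of_mem (ball_sub hz) _]
    exact laverage_ball_le_maximalFunction ν _ y hr
  · calc ⨍⁻ z in ball y r, Ω.indicator g z ∂ν
        ≤ ENNReal.ofReal (r ^ (-μ)) * morreyNorm ν p μ Ω g :=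
          laverage_indicator_le_morreyNorm hp hg hr hy
      _ ≤ ENNReal.ofReal (ρ ^ (-μ)) * morreyNorm ν p μ Ω g := by
          gcongr ENNReal.ofReal ?_ * _
          exact Real.rpow_le_rpow_of_nonpos hρ hρr.le (by linarith)
      _ ≤ _ := le_add_self

end Morrey

section MorreyHaar

variable {V : Type*} [NormedAddCommGroup V] [NormedSpace ℝ V] [FiniteDimensional ℝ V]
  [MeasurableSpace V] [BorelSpace V] (ν : Measure V) [ν.IsAddHaarMeasure]

theorem ofReal_mul_measure_ball_eq {s t : ℝ} (hs : 0 < s) (ht : 0 < t) (x y : V) :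
    ENNReal.ofReal ((t / s) ^ Module.finrank ℝ V) * ν (ball x s) = ν (ball y t) := by
  rw [Measure.addHaar_ball_center, ← Measure.addHaar_ball_mul_of_pos ν y (div_pos ht hs),
    div_mul_cancel₀ _ hs.ne']

theorem div_measure_ball_eq {s t : ℝ} (hs : 0 < s) (ht : 0 < t) (x y : V) (a : ℝ≥0∞) :
    a / ν (ball x s) = ENNReal.ofReal ((t / s) ^ Module.finrank ℝ V) * (a / ν (ball y t)) := by
  have ratio_ne_zero : ENNReal.ofReal ((t / s) ^ Module.finrank ℝ V) ≠ 0 := by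
    simpa using pow_pos (div_pos ht hs) _
  rw [← ofReal_mul_measure_ball_eq ν hs ht x y, ← mul_div_assoc,
    ENNReal.mul_div_mul_left _ _ ratio_ne_zero ENNReal.ofReal_ne_top]

theorem laverage_indicator_one_ball_le {ρ R : ℝ} (hρ : 0 < ρ) (hR : 0 < R) (x c : V) :
    ⨍⁻ y in ball x ρ, (ball c R).indicator (fun _ => 1) y ∂ν ≤
      ENNReal.ofReal ((R / ρ) ^ Module.finrank ℝ V) := by
  calc ⨍⁻ y in ball x ρ, (ball c R).indicator (fun _ => 1) y ∂ν
      ≤ ν (ball c R) / ν (ball x ρ) := by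
        rw [setLAverage_eq]
        gcongr
        exact (setLIntegral_le_lintegral _ _).trans (by simp [measurableSet_ball])
    _ = ENNReal.ofReal ((R / ρ) ^ Module.finrank ℝ V) := by
        rw [← ofReal_mul_measure_ball_eq ν hρ hR x c, ENNReal.mul_div_cancel_right
          (measure_ball_pos ν x hρ).ne' measure_ball_lt_top.ne]

theorem morreyNorm_one_ball_le {p μ R : ℝ} (hp : 0 < p) (hμ : 0 ≤ μ)
    (hμp : μ * p ≤ Module.finrank ℝ V) (hR : 0 < R) (c : V) :
    morreyNorm ν p μ (ball c R) (fun _ => 1) ≤ ENNReal.ofReal (R ^ μ) := by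
  refine morreyNorm_le fun ρ hρ x _ => ?_
  have indicator_rpow : ∀ y, (ball c R).indicator (fun _ => (1 : ℝ≥0∞)) y ^ p =
      (ball c R).indicator (fun _ => 1) y := by
    intro y
    by_cases hy : y ∈ ball c R <;> simp [hy, hp]
  simp only [indicator_rpow]
  rcases le_or_gt ρ R with hρR | hRρ
  · calc ENNReal.ofReal (ρ ^ μ) *
          (⨍⁻ y in ball x ρ, (ball c R).indicator (fun _ => 1) y ∂ν) ^ (1 / p)
        ≤ ENNReal.ofReal (R ^ μ) * (⨍⁻ _ in ball x ρ, 1 ∂ν) ^ (1 / p) := by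
          gcongr
          exact .of_forall fun y => indicator_le_self _ _ y
      _ = ENNReal.ofReal (R ^ μ) := by rw [laverage_ball_const ν x hρ, ENNReal.one_rpow, mul_one]
  · have average_le : ⨍⁻ y in ball x ρ, (ball c R).indicator (fun _ => 1) y ∂ν ≤
        ENNReal.ofReal ((R / ρ) ^ (μ * p)) := by
      refine (laverage_indicator_one_ball_le ν hρ hR x c).trans (ENNReal.ofReal_le_ofReal ?_)
      rw [← Real.rpow_natCast]
      exact Real.rpow_le_rpow_of_exponent_ge (div_pos hR hρ) ((div_le_one hρ).2 hRρ.le) hμp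
    calc ENNReal.ofReal (ρ ^ μ) *
          (⨍⁻ y in ball x ρ, (ball c R).indicator (fun _ => 1) y ∂ν) ^ (1 / p)
        ≤ ENNReal.ofReal (ρ ^ μ) * ENNReal.ofReal ((R / ρ) ^ (μ * p)) ^ (1 / p) := by gcongr
      _ = ENNReal.ofReal (R ^ μ) := by
          rw [ENNReal.ofReal_rpow_of_nonneg (by positivity) (by positivity),
            ← Real.rpow_mul (by positivity), mul_assoc, mul_one_div_cancel hp.ne', mul_one,
            ← ENNReal.ofReal_mul (by positivity), ← Real.mul_rpow hρ.le (by positivity),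
            mul_div_cancel₀ _ hρ.ne']

theorem morreyNorm_le_of_le_mul_add {p μ R : ℝ} {c : V} {h g : V → ℝ≥0∞} {κ A : ℝ≥0∞}
    (hp : 1 ≤ p) (hμ : 0 ≤ μ) (hμp : μ * p ≤ Module.finrank ℝ V) (hR : 0 < R)
    (hg : Measurable ((ball c R).indicator g))
    (hle : ∀ y ∈ ball c R, h y ≤ κ * g y + A) :
    morreyNorm ν p μ (ball c R) h ≤
      κ * morreyNorm ν p μ (ball c R) g + A * ENNReal.ofReal (R ^ μ) := by
  have measurable_one : Measurable ((ball c R).indicator fun _ => (1 : ℝ≥0∞)) :=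
    measurable_const.indicator measurableSet_ball
  calc morreyNorm ν p μ (ball c R) h
      ≤ morreyNorm ν p μ (ball c R) (fun y => κ * g y + A * 1) :=
        morreyNorm_mono (zero_le_one.trans hp) (by simpa using hle)
    _ ≤ morreyNorm ν p μ (ball c R) (fun y => κ * g y) +
          morreyNorm ν p μ (ball c R) (fun _ => A * 1) := by
        refine morreyNorm_add_le hp ?_ (measurable_const.indicator measurableSet_ball)
        simpa only [← indicator_const_mul] using hg.const_mul κ
    _ ≤ _ := by
        rw [morreyNorm_const_mul (by linarith) hg,
          morreyNorm_const_mul (by linarith) measurable_one]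
        gcongr
        exact morreyNorm_one_ball_le ν (by linarith) hμ hμp hR c

theorem exists_laverage_maximalFunction_rpow_le {p : ℝ} (hp : 1 < p) :
    ∃ C : ℝ≥0, ∀ g : V → ℝ≥0∞, Measurable g → ∀ (x : V) {ρ : ℝ}, 0 < ρ →
      ⨍⁻ y in ball x ρ, maximalFunction ν ((ball x (2 * ρ)).indicator g) y ^ p ∂ν ≤
        C * ⨍⁻ y in ball x (2 * ρ), g y ^ p ∂ν := by
  obtain ⟨C, strong⟩ := exists_lintegral_maximalFunction_rpow_le ν hp
  refine ⟨C * 2 ^ Module.finrank ℝ V, fun g hg x ρ hρ => ?_⟩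
  set B := ball x (2 * ρ)
  have indicator_rpow : ∀ y, B.indicator g y ^ p = B.indicator (fun y => g y ^ p) y := by
    intro y
    by_cases hy : y ∈ B
    · simp [hy]
    · simp [hy, zero_lt_one.trans hp]
  calc ⨍⁻ y in ball x ρ, maximalFunction ν (B.indicator g) y ^ p ∂ν
      ≤ (∫⁻ y, maximalFunction ν (B.indicator g) y ^ p ∂ν) / ν (ball x ρ) := by
        rw [setLAverage_eq]
        gcongr
        exact Measure.restrict_le_self
    _ ≤ (C * ∫⁻ y, B.indicator g y ^ p ∂ν) / ν (ball x ρ) := by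
        gcongr
        exact strong _ (hg.indicator measurableSet_ball)
    _ = ↑(C * 2 ^ Module.finrank ℝ V) * ⨍⁻ y in B, g y ^ p ∂ν := by
        simp only [indicator_rpow]
        rw [lintegral_indicator measurableSet_ball, setLAverage_eq, mul_div_assoc,
          div_measure_ball_eq ν hρ (by positivity : 0 < 2 * ρ) x x, mul_div_cancel_right₀ _ hρ.ne',
          ← mul_assoc]
        simp [B, ENNReal.ofReal_pow]

theorem exists_laverage_maximalFunction_rpow_le_morreyNorm {p : ℝ} (hp : 1 < p) :
    ∃ C : ℝ≥0, ∀ {μ : ℝ}, 0 ≤ μ → ∀ {Ω : Set V} {g : V → ℝ≥0∞}, Measurable (Ω.indicator g) →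
      ∀ {x : V} {ρ : ℝ}, x ∈ Ω → 0 < ρ →
        (⨍⁻ y in ball x ρ, maximalFunction ν ((ball x (2 * ρ)).indicator (Ω.indicator g)) y ^ p
          ∂ν) ^ (1 / p) ≤ C * (ENNReal.ofReal (ρ ^ (-μ)) * morreyNorm ν p μ Ω g) := by
  obtain ⟨C, strong⟩ := exists_laverage_maximalFunction_rpow_le ν hp
  have hp' : 0 ≤ 1 / p := by positivity
  refine ⟨C ^ (1 / p), fun {μ} hμ {Ω g} hg {x ρ} hx hρ => ?_⟩
  calc (⨍⁻ y in ball x ρ, maximalFunction ν ((ball x (2 * ρ)).indicator (Ω.indicator g)) y ^ p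
        ∂ν) ^ (1 / p)
      ≤ (C * ⨍⁻ y in ball x (2 * ρ), Ω.indicator g y ^ p ∂ν) ^ (1 / p) := by
        gcongr
        exact strong _ hg x hρ
    _ ≤ C ^ (1 / p) * (ENNReal.ofReal ((2 * ρ) ^ (-μ)) * morreyNorm ν p μ Ω g) := by
        rw [ENNReal.mul_rpow_of_nonneg _ _ hp']
        gcongr
        exact laverage_indicator_rpow_le_morreyNorm (by positivity) hx
    _ ≤ ↑(C ^ (1 / p)) * (ENNReal.ofReal (ρ ^ (-μ)) * morreyNorm ν p μ Ω g) := by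
        rw [ENNReal.coe_rpow_of_nonneg _ hp']
        gcongr _ * (ENNReal.ofReal ?_ * _)
        exact Real.rpow_le_rpow_of_nonpos hρ (by linarith) (by linarith)

theorem exists_morreyNorm_maximalFunction_le {p : ℝ} (hp : 1 < p) :
    ∃ C : ℝ≥0, ∀ {μ : ℝ}, 0 ≤ μ → ∀ {Ω : Set V} {g : V → ℝ≥0∞}, Measurable (Ω.indicator g) →
      morreyNorm ν p μ Ω (maximalFunction ν (Ω.indicator g)) ≤ C * morreyNorm ν p μ Ω g := by
  obtain ⟨C, localMax_le⟩ := exists_laverage_maximalFunction_rpow_le_morreyNorm ν hp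
  refine ⟨C + 1, fun {μ} hμ {Ω g} hg => morreyNorm_le fun ρ hρ x hx => ?_⟩
  set L := ENNReal.ofReal (ρ ^ (-μ)) * morreyNorm ν p μ Ω g with hL
  set localMax := maximalFunction ν ((ball x (2 * ρ)).indicator (Ω.indicator g))
  have pointwise : ∀ y ∈ ball x ρ,
      Ω.indicator (maximalFunction ν (Ω.indicator g)) y ≤ localMax y + L := by
    intro y hy
    by_cases hyΩ : y ∈ Ω
    · simpa [hyΩ] using maximalFunction_indicator_le hp hμ hρ hg hyΩ hy
    · simp [hyΩ]
  calc ENNReal.ofReal (ρ ^ μ) *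
        (⨍⁻ y in ball x ρ, Ω.indicator (maximalFunction ν (Ω.indicator g)) y ^ p ∂ν) ^ (1 / p)
      ≤ ENNReal.ofReal (ρ ^ μ) * (⨍⁻ y in ball x ρ, (localMax y + L) ^ p ∂ν) ^ (1 / p) := by
        rw [setLAverage_eq, setLAverage_eq]
        gcongr ENNReal.ofReal _ * (?_ / _) ^ _
        exact setLIntegral_mono' measurableSet_ball fun y hy => by gcongr; exact pointwise y hy
    _ ≤ ENNReal.ofReal (ρ ^ μ) * ((⨍⁻ y in ball x ρ, localMax y ^ p ∂ν) ^ (1 / p) +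
          (⨍⁻ _ in ball x ρ, L ^ p ∂ν) ^ (1 / p)) := by
        gcongr
        exact ENNReal.lintegral_Lp_add_le (measurable_maximalFunction ν _).aemeasurable
          aemeasurable_const hp.le
    _ ≤ ENNReal.ofReal (ρ ^ μ) * (C * L + L) := by
        rw [laverage_ball_const ν x hρ, ← ENNReal.rpow_mul, mul_one_div_cancel (by positivity),
          ENNReal.rpow_one]
        gcongr
        exact localMax_le hμ hg hx hρ
    _ = ↑(C + 1) * morreyNorm ν p μ Ω g := by
        rw [← add_one_mul, hL, mul_left_comm]
        nth_rw 1 [← neg_neg μ]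
        rw [ofReal_rpow_neg_mul_cancel hρ]
        push_cast
        rfl

theorem enorm_le_laverage_ball_enorm_sub_add {F : Type*} [NormedAddCommGroup F] {f : V → F} {c : V}
    {R : ℝ} (hR : 0 < R) (hf : ContinuousOn f (ball c R)) (y : V) :
    ‖f y‖ₑ ≤ ⨍⁻ z in ball c R, ‖f z - f y‖ₑ ∂ν + ⨍⁻ z in ball c R, ‖f z‖ₑ ∂ν := by
  calc ‖f y‖ₑ = ⨍⁻ _ in ball c R, ‖f y‖ₑ ∂ν := (laverage_ball_const ν c hR _).symm
    _ ≤ ⨍⁻ z in ball c R, (‖f z - f y‖ₑ + ‖f z‖ₑ) ∂ν := by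
        refine laverage_mono_ae (.of_forall fun z => ?_)
        simpa [enorm_sub_rev, add_comm] using enorm_sub_le (a := f z) (b := f z - f y)
    _ = _ := by
        rw [setLAverage_eq, setLAverage_eq, setLAverage_eq,
          lintegral_add_right' _ (hf.enorm.aemeasurable measurableSet_ball), ENNReal.add_div]

end MorreyHaar

section Hedberg

theorem lintegral_Ioi_rpow_neg {μ s : ℝ} (hμ : 1 < μ) (hs : 0 < s) :
    ∫⁻ t in Ioi s, ENNReal.ofReal (t ^ (-μ)) = ENNReal.ofReal (s ^ (1 - μ) / (μ - 1)) := by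
  rw [← ofReal_integral_eq_lintegral_ofReal (integrableOn_Ioi_rpow_of_lt (by linarith) hs),
    integral_Ioi_rpow_of_lt (by linarith) hs, ← neg_div_neg_eq]
  · congr 2 <;> ring_nf
  · filter_upwards [ae_restrict_mem measurableSet_Ioi] with t ht
    exact Real.rpow_nonneg (hs.le.trans (le_of_lt ht)) _

variable {μ : ℝ} {H : ℝ → ℝ≥0∞} {m K : ℝ≥0∞}

theorem lintegral_Ioi_le_add_of_le_of_le_rpow_neg (hμ : 1 < μ) (hm : ∀ t > 0, H t ≤ m)
    (hK : ∀ t > 0, H t ≤ ENNReal.ofReal (t ^ (-μ)) * K) {s : ℝ} (hs : 0 < s) :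
    ∫⁻ t in Ioi 0, H t ≤ m * ENNReal.ofReal s + ENNReal.ofReal (s ^ (1 - μ) / (μ - 1)) * K := by
  calc ∫⁻ t in Ioi 0, H t
      ≤ (∫⁻ t in Ioc 0 s, H t) + ∫⁻ t in Ioi s, H t := by
        rw [← Ioc_union_Ioi_eq_Ioi hs.le]
        exact lintegral_union_le _ _ _
    _ ≤ (∫⁻ _ in Ioc 0 s, m) + ∫⁻ t in Ioi s, ENNReal.ofReal (t ^ (-μ)) * K :=
        add_le_add (setLIntegral_mono' measurableSet_Ioc fun t ht => hm t ht.1)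
          (setLIntegral_mono' measurableSet_Ioi fun t ht => hK t (hs.trans ht))
    _ = _ := by
        rw [lintegral_mul_const _ (by fun_prop), lintegral_Ioi_rpow_neg hμ hs]
        simp

theorem mul_add_rpow_div_mul_eq {a b : ℝ} (hμ : 1 < μ) (ha : 0 < a) (hb : 0 < b) :
    a * (b / a) ^ (1 / μ) + ((b / a) ^ (1 / μ)) ^ (1 - μ) / (μ - 1) * b =
      μ / (μ - 1) * (a ^ (1 - 1 / μ) * b ^ (1 / μ)) := by
  have hμ0 : μ ≠ 0 := by positivity
  have hμ1 : μ - 1 ≠ 0 := by linarith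
  set s := (b / a) ^ (1 / μ) with hs
  have second : s ^ (1 - μ) * b = a * s := by
    rw [Real.rpow_sub (by positivity), Real.rpow_one, hs, ← Real.rpow_mul (by positivity),
      one_div_mul_cancel hμ0, Real.rpow_one]
    field_simp
  have first : a * s = a ^ (1 - 1 / μ) * b ^ (1 / μ) := by
    rw [hs, Real.div_rpow hb.le ha.le, Real.rpow_sub ha, Real.rpow_one]
    ring
  rw [div_mul_eq_mul_div, second, ← first]
  field_simp
  ring

theorem lintegral_Ioi_le_mul_of_le_of_le_rpow_neg (hμ : 1 < μ) (hm : ∀ t > 0, H t ≤ m)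
    (hK : ∀ t > 0, H t ≤ ENNReal.ofReal (t ^ (-μ)) * K) :
    ∫⁻ t in Ioi 0, H t ≤ ENNReal.ofReal (μ / (μ - 1)) * (m ^ (1 - 1 / μ) * K ^ (1 / μ)) := by
  have factor_pos : 0 < μ / (μ - 1) := div_pos (by linarith) (by linarith)
  have exp_pos : 0 < 1 - 1 / μ := sub_pos.2 ((div_lt_one (by linarith)).2 hμ)
  have exp_pos' : 0 < 1 / μ := by positivity
  rcases eq_or_ne m 0 with rfl | m_ne_zero
  · rw [setLIntegral_eq_zero measurableSet_Ioi fun t ht => le_zero_iff.1 (hm t ht)]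
    exact zero_le
  rcases eq_or_ne K 0 with rfl | K_ne_zero
  · rw [setLIntegral_eq_zero measurableSet_Ioi fun t ht => by simpa using hK t ht]
    exact zero_le
  have factor_ne_zero : ENNReal.ofReal (μ / (μ - 1)) ≠ 0 := by simpa using factor_pos
  rcases eq_or_ne m ⊤ with rfl | m_ne_top
  · have K_rpow_ne_zero : K ^ (1 / μ) ≠ 0 :=
      (ENNReal.rpow_eq_zero_iff_of_pos exp_pos').not.2 K_ne_zero
    rw [ENNReal.top_rpow_of_pos exp_pos, ENNReal.top_mul K_rpow_ne_zero,
      ENNReal.mul_top factor_ne_zero]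
    exact le_top
  rcases eq_or_ne K ⊤ with rfl | K_ne_top
  · have m_rpow_ne_zero : m ^ (1 - 1 / μ) ≠ 0 :=
      (ENNReal.rpow_eq_zero_iff_of_pos exp_pos).not.2 m_ne_zero
    rw [ENNReal.top_rpow_of_pos exp_pos', ENNReal.mul_top m_rpow_ne_zero,
      ENNReal.mul_top factor_ne_zero]
    exact le_top
  lift m to ℝ≥0 using m_ne_top
  lift K to ℝ≥0 using K_ne_top
  have m_pos : (0 : ℝ) < m := by simpa [pos_iff_ne_zero] using m_ne_zero
  have K_pos : (0 : ℝ) < K := by simpa [pos_iff_ne_zero] using K_ne_zero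
  -- At this value of the cut the two terms of the bound are proportional.
  refine (lintegral_Ioi_le_add_of_le_of_le_rpow_neg hμ hm hK
    (s := (K / m : ℝ) ^ (1 / μ)) (by positivity)).trans_eq ?_
  rw [← ENNReal.ofReal_coe_nnreal, ← ENNReal.ofReal_coe_nnreal,
    ENNReal.ofReal_rpow_of_nonneg m_pos.le exp_pos.le,
    ENNReal.ofReal_rpow_of_nonneg K_pos.le exp_pos'.le, ← ENNReal.ofReal_mul (by positivity),
    ← ENNReal.ofReal_mul (by positivity), ← ENNReal.ofReal_mul (by positivity),
    ← ENNReal.ofReal_mul factor_pos.le, ← ENNReal.ofReal_add (by positivity) (by positivity),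
    mul_add_rpow_div_mul_eq hμ m_pos K_pos]

end Hedberg

section IndicatorMeasurability

variable {X F : Type*} [TopologicalSpace X] [MeasurableSpace X] {Ω : Set X}

theorem measurable_indicator_of_continuousOn [OpensMeasurableSpace X] {g : X → ℝ≥0∞}
    (hΩ : MeasurableSet Ω) (hg : ContinuousOn g Ω) : Measurable (Ω.indicator g) := by
  classical
  rw [← piecewise_eq_indicator]
  exact hg.measurable_piecewise continuousOn_const hΩ

theorem measurable_indicator_laverage_enorm_sub [SecondCountableTopology X] [BorelSpace X]
    [NormedAddCommGroup F] (ν : Measure X) [SFinite ν] (hΩ : MeasurableSet Ω) {f : X → F}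
    (hf : ContinuousOn f Ω) :
    Measurable (Ω.indicator fun y => ⨍⁻ z in Ω, ‖f z - f y‖ₑ ∂ν) := by
  have kernel : Measurable ((Ω ×ˢ Ω).indicator fun x : X × X => ‖f x.2 - f x.1‖ₑ) := by
    refine measurable_indicator_of_continuousOn (hΩ.prod hΩ) (ContinuousOn.enorm ?_)
    exact (hf.comp continuousOn_snd fun x hx => hx.2).sub
      (hf.comp continuousOn_fst fun x hx => hx.1)
  convert (kernel.lintegral_prod_right' (ν := ν)).div_const (ν Ω) using 1
  ext y
  by_cases hy : y ∈ Ω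
  · rw [indicator_of_mem hy, setLAverage_eq, ← lintegral_indicator hΩ]
    congr 2
    ext z
    by_cases hz : z ∈ Ω <;> simp [hy, hz]
  · simp [hy]

end IndicatorMeasurability

section Potential

variable {V F : Type*} [NormedAddCommGroup V] [NormedSpace ℝ V] [NormedAddCommGroup F]
  [NormedSpace ℝ F] {f : V → F} {Ω : Set V}

theorem enorm_add_sub_le_mul_lintegral_enorm_fderiv (hΩ : IsOpen Ω) (hf : ContDiffOn ℝ 1 f Ω)
    {x a : V} (hseg : ∀ s ∈ Icc (0 : ℝ) 1, x + s • a ∈ Ω) :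
    ‖f (x + a) - f x‖ₑ ≤ ‖a‖ₑ * ∫⁻ s in Icc (0 : ℝ) 1, ‖fderiv ℝ f (x + s • a)‖ₑ := by
  have curve : ContDiffOn ℝ 1 (fun s : ℝ => f (x + s • a)) (Icc 0 1) :=
    hf.comp (by fun_prop) hseg
  have deriv_curve : ∀ s ∈ Icc (0 : ℝ) 1,
      deriv (fun s : ℝ => f (x + s • a)) s = fderiv ℝ f (x + s • a) a := by
    intro s hs
    have segment : HasDerivAt (fun s : ℝ => x + s • a) a s := by
      simpa using ((hasDerivAt_id s).smul_const a).const_add x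
    have differentiable : DifferentiableAt ℝ f (x + s • a) :=
      (hf.differentiableOn one_ne_zero).differentiableAt (hΩ.mem_nhds (hseg s hs))
    exact (differentiable.hasFDerivAt.comp_hasDerivAt s segment).deriv
  calc ‖f (x + a) - f x‖ₑ
      ≤ ∫⁻ s in Icc (0 : ℝ) 1, ‖deriv (fun s : ℝ => f (x + s • a)) s‖ₑ := by
        simpa using enorm_sub_le_lintegral_deriv_of_contDiffOn_Icc curve zero_le_one
    _ ≤ ∫⁻ s in Icc (0 : ℝ) 1, ‖a‖ₑ * ‖fderiv ℝ f (x + s • a)‖ₑ := by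
        refine setLIntegral_mono' measurableSet_Icc fun s hs => ?_
        rw [deriv_curve s hs, mul_comm]
        exact ContinuousLinearMap.le_opENorm _ _
    _ = ‖a‖ₑ * ∫⁻ s in Icc (0 : ℝ) 1, ‖fderiv ℝ f (x + s • a)‖ₑ :=
        lintegral_const_mul' _ _ enorm_ne_top

theorem enorm_sub_le_lintegral_Ioi_indicator_enorm_fderiv (hΩ : IsOpen Ω) (hf : ContDiffOn ℝ 1 f Ω)
    {y z : V} (hseg : ∀ s ∈ Icc (0 : ℝ) 1, y + s • (z - y) ∈ Ω) {D : ℝ} (hD : dist z y ≤ D) :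
    ‖f z - f y‖ₑ ≤ ∫⁻ s in Ioi (0 : ℝ),
      ENNReal.ofReal D * Ω.indicator (fun x => ‖fderiv ℝ f x‖ₑ) (y + s • (z - y)) := by
  set G := Ω.indicator fun x => ‖fderiv ℝ f x‖ₑ
  have enorm_sub_le : ‖z - y‖ₑ ≤ ENNReal.ofReal D := by
    rw [← ofReal_norm, ← dist_eq_norm]
    exact ENNReal.ofReal_le_ofReal hD
  calc ‖f z - f y‖ₑ ≤ ‖z - y‖ₑ * ∫⁻ s in Icc (0 : ℝ) 1, ‖fderiv ℝ f (y + s • (z - y))‖ₑ := by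
        simpa using enorm_add_sub_le_mul_lintegral_enorm_fderiv hΩ hf hseg
    _ = ‖z - y‖ₑ * ∫⁻ s in Ioc (0 : ℝ) 1, G (y + s • (z - y)) := by
        rw [restrict_Ioc_eq_restrict_Icc]
        congr 1
        exact setLIntegral_congr_fun measurableSet_Icc fun s hs =>
          (indicator_of_mem (hseg s hs) fun x => ‖fderiv ℝ f x‖ₑ).symm
    _ ≤ ENNReal.ofReal D * ∫⁻ s in Ioi (0 : ℝ), G (y + s • (z - y)) :=
        mul_le_mul' enorm_sub_le (lintegral_mono_set Ioc_subset_Ioi_self)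
    _ = _ := (lintegral_const_mul' _ _ ENNReal.ofReal_ne_top).symm

theorem lintegral_Ioi_comp_mul_right {D : ℝ} (hD : 0 < D) (H : ℝ → ℝ≥0∞) :
    ∫⁻ s in Ioi 0, ENNReal.ofReal D * H (s * D) = ∫⁻ t in Ioi 0, H t := by
  have image : (fun s : ℝ => s * D) '' Ioi 0 = Ioi 0 := by
    simpa only [mul_comm D] using image_const_mul_Ioi_zero hD
  conv_rhs => rw [← image]
  rw [lintegral_image_eq_lintegral_abs_deriv_mul measurableSet_Ioi
    (fun s _ => (hasDerivAt_mul_const D).hasDerivWithinAt) (mul_left_injective₀ hD.ne').injOn,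
    abs_of_pos hD]

variable [MeasurableSpace V] [BorelSpace V]

theorem measurable_indicator_enorm_fderiv_s12 (hΩ : IsOpen Ω) (hf : ContDiffOn ℝ 1 f Ω) :
    Measurable (Ω.indicator fun x => ‖fderiv ℝ f x‖ₑ) :=
  measurable_indicator_of_continuousOn hΩ.measurableSet
    (hf.continuousOn_fderiv_of_isOpen hΩ le_rfl).enorm

variable [FiniteDimensional ℝ V] (ν : Measure V) [ν.IsAddHaarMeasure]

theorem lintegral_comp_add_smul_sub {s : ℝ} (hs : 0 < s) (y : V) {h : V → ℝ≥0∞}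
    (hh : Measurable h) :
    ∫⁻ z, h (y + s • (z - y)) ∂ν = ENNReal.ofReal ((s ^ Module.finrank ℝ V)⁻¹) * ∫⁻ z, h z ∂ν := by
  calc ∫⁻ z, h (y + s • (z - y)) ∂ν = ∫⁻ z, h (y + s • z) ∂ν :=
        lintegral_sub_right_eq_self (fun z => h (y + s • z)) y
    _ = ∫⁻ z, h (y + z) ∂(ν.map (s • ·)) :=
        (lintegral_map (f := fun z => h (y + z)) (by fun_prop) (by fun_prop)).symm
    _ = ENNReal.ofReal ((s ^ Module.finrank ℝ V)⁻¹) * ∫⁻ z, h z ∂ν := by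
        rw [Measure.map_addHaar_smul ν hs.ne', lintegral_smul_measure,
          lintegral_add_left_eq_self, abs_of_nonneg (by positivity), smul_eq_mul]

theorem lintegral_ball_comp_add_smul_sub {s D : ℝ} (hs : 0 < s) (hD : 0 < D) (y : V)
    {h : V → ℝ≥0∞} (hh : Measurable h) :
    ∫⁻ z in ball y D, h (y + s • (z - y)) ∂ν = ν (ball y D) * ⨍⁻ w in ball y (s * D), h w ∂ν := by
  have indicator_comp : ∀ z, (ball y D).indicator (fun z => h (y + s • (z - y))) z =
      (ball y (s * D)).indicator h (y + s • (z - y)) := by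
    intro z
    have mem_iff : y + s • (z - y) ∈ ball y (s * D) ↔ z ∈ ball y D := by
      rw [mem_ball, mem_ball, dist_self_add_left, norm_smul, Real.norm_of_nonneg hs.le,
        mul_lt_mul_iff_right₀ hs, dist_eq_norm]
    by_cases hz : z ∈ ball y D
    · simp [hz, mem_iff.2 hz]
    · simp [hz, mt mem_iff.1 hz]
  rw [← lintegral_indicator measurableSet_ball]
  simp only [indicator_comp]
  rw [lintegral_comp_add_smul_sub ν hs y (hh.indicator measurableSet_ball),
    lintegral_indicator measurableSet_ball,
    ← measure_mul_setLAverage (μ := ν) _ measure_ball_lt_top.ne,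
    ← ofReal_mul_measure_ball_eq ν hD (mul_pos hs hD) y y, ← mul_assoc, ← mul_assoc,
    mul_div_cancel_right₀ _ hD.ne', ← ENNReal.ofReal_mul (by positivity),
    inv_mul_cancel₀ (by positivity), ENNReal.ofReal_one, one_mul]

theorem setLIntegral_enorm_sub_le (hΩ : IsOpen Ω) (hΩ' : Convex ℝ Ω) (hf : ContDiffOn ℝ 1 f Ω)
    {y : V} {D : ℝ} (hy : y ∈ Ω) (hD : 0 < D) (hΩD : Ω ⊆ ball y D) :
    ∫⁻ z in Ω, ‖f z - f y‖ₑ ∂ν ≤ ν (ball y D) *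
      ∫⁻ t in Ioi 0, ⨍⁻ w in ball y t, Ω.indicator (fun x => ‖fderiv ℝ f x‖ₑ) w ∂ν := by
  set G := Ω.indicator fun x => ‖fderiv ℝ f x‖ₑ
  have measurable_G : Measurable G := measurable_indicator_enorm_fderiv_s12 hΩ hf
  have along_segment : ∀ z ∈ Ω,
      ‖f z - f y‖ₑ ≤ ∫⁻ s in Ioi (0 : ℝ), ENNReal.ofReal D * G (y + s • (z - y)) := fun z hz =>
    enorm_sub_le_lintegral_Ioi_indicator_enorm_fderiv hΩ hf
      (fun s hs => hΩ'.add_smul_sub_mem hy hz hs) (mem_ball.1 (hΩD hz)).le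
  calc ∫⁻ z in Ω, ‖f z - f y‖ₑ ∂ν
      ≤ ∫⁻ z in ball y D, (∫⁻ s in Ioi (0 : ℝ), ENNReal.ofReal D * G (y + s • (z - y))) ∂ν :=
        (setLIntegral_mono' hΩ.measurableSet along_segment).trans (lintegral_mono_set hΩD)
    _ = ∫⁻ s in Ioi (0 : ℝ), (∫⁻ z in ball y D, ENNReal.ofReal D * G (y + s • (z - y)) ∂ν) :=
        lintegral_lintegral_swap (f := fun z s => ENNReal.ofReal D * G (y + s • (z - y)))
          (by fun_prop)
    _ = ∫⁻ s in Ioi (0 : ℝ),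
          ν (ball y D) * (ENNReal.ofReal D * ⨍⁻ w in ball y (s * D), G w ∂ν) := by
        refine setLIntegral_congr_fun measurableSet_Ioi fun s hs => ?_
        rw [lintegral_const_mul' _ _ ENNReal.ofReal_ne_top,
          lintegral_ball_comp_add_smul_sub ν hs hD y measurable_G, mul_left_comm]
    _ = ν (ball y D) * ∫⁻ t in Ioi 0, ⨍⁻ w in ball y t, G w ∂ν := by
        rw [lintegral_const_mul' _ _ measure_ball_lt_top.ne,
          lintegral_Ioi_comp_mul_right hD fun t => ⨍⁻ w in ball y t, G w ∂ν]

theorem laverage_ball_enorm_sub_le {c : V} {R : ℝ} (hf : ContDiffOn ℝ 1 f (ball c R)) {y : V}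
    (hy : y ∈ ball c R) :
    ⨍⁻ z in ball c R, ‖f z - f y‖ₑ ∂ν ≤ 2 ^ Module.finrank ℝ V *
      ∫⁻ t in Ioi 0, ⨍⁻ w in ball y t, (ball c R).indicator (fun x => ‖fderiv ℝ f x‖ₑ) w ∂ν := by
  have hR : 0 < R := pos_of_mem_ball hy
  have ball_sub : ball c R ⊆ ball y (2 * R) :=
    ball_subset_ball' (by linarith [mem_ball'.1 hy])
  rw [setLAverage_eq]
  refine ENNReal.div_le_of_le_mul ((setLIntegral_enorm_sub_le ν isOpen_ball (convex_ball c R) hf hy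
    (by positivity) ball_sub).trans_eq ?_)
  rw [← ofReal_mul_measure_ball_eq ν hR (by positivity : 0 < 2 * R) c y,
    mul_div_cancel_right₀ _ hR.ne', ENNReal.ofReal_pow zero_le_two, ENNReal.ofReal_ofNat]
  ring

end Potential

section DifferenceQuotient

theorem enorm_map_le_enorm_sub_add {G F L : Type*} [AddCommGroup G] [NormedAddCommGroup F]
    [FunLike L G F] [AddMonoidHomClass L G F] (l : L) (f : G → F) (x a : G) :
    ‖l a‖ₑ ≤ ‖(f (x + a) - l (x + a)) - (f x - l x)‖ₑ + (‖f (x + a)‖ₑ + ‖f x‖ₑ) := by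
  calc ‖l a‖ₑ = ‖(f (x + a) - f x) - ((f (x + a) - l (x + a)) - (f x - l x))‖ₑ := by
        rw [map_add]
        congr 1
        abel
    _ ≤ ‖f (x + a) - f x‖ₑ + ‖(f (x + a) - l (x + a)) - (f x - l x)‖ₑ := enorm_sub_le
    _ ≤ (‖f (x + a)‖ₑ + ‖f x‖ₑ) + ‖(f (x + a) - l (x + a)) - (f x - l x)‖ₑ := by
        gcongr
        exact enorm_sub_le
    _ = _ := add_comm _ _

variable {V F : Type*} [NormedAddCommGroup V] [NormedSpace ℝ V] [NormedAddCommGroup F]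
  [NormedSpace ℝ F]

theorem opENorm_le_of_forall_norm_eq {r : ℝ} (hr : 0 < r) {M : ℝ≥0∞} (L : V →L[ℝ] F)
    (h : ∀ a : V, ‖a‖ = r → ‖L a‖ₑ ≤ M * ‖a‖ₑ) : ‖L‖ₑ ≤ M := by
  refine L.opENorm_le_bound fun x => ?_
  rcases eq_or_ne x 0 with rfl | hx
  · simp
  have scale_pos : 0 < r / ‖x‖ := by positivity
  have scaled := h ((r / ‖x‖) • x)
    (by rw [norm_smul, Real.norm_of_nonneg scale_pos.le, div_mul_cancel₀ _ (norm_ne_zero_iff.2 hx)])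
  rw [map_smul, enorm_smul, enorm_smul, mul_left_comm] at scaled
  exact (ENNReal.mul_le_mul_iff_right (by simpa using ⟨hr.ne', hx⟩) enorm_ne_top).1 scaled

variable [MeasurableSpace V] [BorelSpace V] {f : V → F} (ν : Measure V)

section Translation

variable [SecondCountableTopology V] [SFinite ν] [ν.IsAddRightInvariant] {Ω A : Set V}

theorem setLIntegral_enorm_add_sub_le (hΩ : IsOpen Ω) (hf : ContDiffOn ℝ 1 f Ω)
    (hA : MeasurableSet A) {a : V} (hseg : ∀ x ∈ A, ∀ s ∈ Icc (0 : ℝ) 1, x + s • a ∈ Ω) :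
    ∫⁻ x in A, ‖f (x + a) - f x‖ₑ ∂ν ≤ ‖a‖ₑ * ∫⁻ x in Ω, ‖fderiv ℝ f x‖ₑ ∂ν := by
  set G := Ω.indicator fun x => ‖fderiv ℝ f x‖ₑ
  have measurable_G : Measurable G := measurable_indicator_enorm_fderiv_s12 hΩ hf
  calc ∫⁻ x in A, ‖f (x + a) - f x‖ₑ ∂ν
      ≤ ∫⁻ x in A, (‖a‖ₑ * ∫⁻ s in Icc (0 : ℝ) 1, G (x + s • a)) ∂ν := by
        refine setLIntegral_mono' hA fun x hx =>
          (enorm_add_sub_le_mul_lintegral_enorm_fderiv hΩ hf (hseg x hx)).trans_eq ?_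
        congr 1
        exact setLIntegral_congr_fun measurableSet_Icc fun s hs =>
          (indicator_of_mem (hseg x hx s hs) fun x => ‖fderiv ℝ f x‖ₑ).symm
    _ = ‖a‖ₑ * ∫⁻ s in Icc (0 : ℝ) 1, (∫⁻ x in A, G (x + s • a) ∂ν) := by
        rw [lintegral_const_mul' _ _ enorm_ne_top,
          lintegral_lintegral_swap (f := fun x s => G (x + s • a)) (by fun_prop)]
    _ ≤ ‖a‖ₑ * ∫⁻ _ in Icc (0 : ℝ) 1, (∫⁻ x, G x ∂ν) := by
        refine mul_le_mul_right (lintegral_mono fun s => ?_) _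
        exact (setLIntegral_le_lintegral _ _).trans_eq (lintegral_add_right_eq_self G (s • a))
    _ = ‖a‖ₑ * ∫⁻ x in Ω, ‖fderiv ℝ f x‖ₑ ∂ν := by
        simp [G, lintegral_indicator hΩ.measurableSet]

theorem enorm_apply_mul_measure_le (hΩ : IsOpen Ω) (hf : ContDiffOn ℝ 1 f Ω)
    (hA : MeasurableSet A) {a : V} (hseg : ∀ x ∈ A, ∀ s ∈ Icc (0 : ℝ) 1, x + s • a ∈ Ω)
    (L : V →L[ℝ] F) :
    ‖L a‖ₑ * ν A ≤
      ‖a‖ₑ * ∫⁻ x in Ω, ‖fderiv ℝ f x - L‖ₑ ∂ν + 2 * ∫⁻ x in Ω, ‖f x‖ₑ ∂ν := by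
  set U := Ω.indicator fun x => ‖f x‖ₑ with hU
  have measurable_U : Measurable U :=
    measurable_indicator_of_continuousOn hΩ.measurableSet hf.continuousOn.enorm
  have integral_U : ∫⁻ x, U x ∂ν = ∫⁻ x in Ω, ‖f x‖ₑ ∂ν := lintegral_indicator hΩ.measurableSet _
  have fderiv_sub_L : ∀ x ∈ Ω, fderiv ℝ (fun x => f x - L x) x = fderiv ℝ f x - L := by
    intro x hx
    rw [fderiv_fun_sub ((hf.differentiableOn one_ne_zero).differentiableAt (hΩ.mem_nhds hx))
      L.differentiableAt, L.fderiv]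
  have pointwise : ∀ x ∈ A,
      ‖L a‖ₑ ≤ ‖(f (x + a) - L (x + a)) - (f x - L x)‖ₑ + (U (x + a) + U x) := by
    intro x hx
    have hx₀ : x ∈ Ω := by simpa using hseg x hx 0 (by simp)
    have hx₁ : x + a ∈ Ω := by simpa using hseg x hx 1 (by simp)
    rw [hU, indicator_of_mem hx₁, indicator_of_mem hx₀]
    exact enorm_map_le_enorm_sub_add L f x a
  calc ‖L a‖ₑ * ν A = ∫⁻ _ in A, ‖L a‖ₑ ∂ν := (setLIntegral_const _ _).symm
    _ ≤ ∫⁻ x in A, (‖(f (x + a) - L (x + a)) - (f x - L x)‖ₑ + (U (x + a) + U x)) ∂ν :=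
        setLIntegral_mono' hA pointwise
    _ = ∫⁻ x in A, ‖(f (x + a) - L (x + a)) - (f x - L x)‖ₑ ∂ν +
          (∫⁻ x in A, U (x + a) ∂ν + ∫⁻ x in A, U x ∂ν) := by
        rw [lintegral_add_right _ (by fun_prop), lintegral_add_right _ measurable_U]
    _ ≤ ‖a‖ₑ * ∫⁻ x in Ω, ‖fderiv ℝ (fun x => f x - L x) x‖ₑ ∂ν +
          (∫⁻ x, U x ∂ν + ∫⁻ x, U x ∂ν) := by
        refine add_le_add (setLIntegral_enorm_add_sub_le ν hΩ (hf.sub L.contDiff.contDiffOn)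
          hA hseg) (add_le_add ?_ (setLIntegral_le_lintegral _ _))
        exact (setLIntegral_le_lintegral _ _).trans_eq (lintegral_add_right_eq_self U a)
    _ = ‖a‖ₑ * ∫⁻ x in Ω, ‖fderiv ℝ f x - L‖ₑ ∂ν + 2 * ∫⁻ x in Ω, ‖f x‖ₑ ∂ν := by
        rw [integral_U, two_mul]
        congr 2
        exact setLIntegral_congr_fun hΩ.measurableSet fun x hx => by rw [fderiv_sub_L x hx]

end Translation

theorem enorm_continuousLinearMap_le [FiniteDimensional ℝ V] [ν.IsAddHaarMeasure] {c : V} {R : ℝ}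
    (hR : 0 < R) (hf : ContDiffOn ℝ 1 f (ball c R)) (L : V →L[ℝ] F) :
    ‖L‖ₑ ≤ 2 ^ Module.finrank ℝ V * (⨍⁻ x in ball c R, ‖fderiv ℝ f x - L‖ₑ ∂ν +
      ENNReal.ofReal (4 / R) * ⨍⁻ x in ball c R, ‖f x‖ₑ ∂ν) := by
  set M := 2 ^ Module.finrank ℝ V * (⨍⁻ x in ball c R, ‖fderiv ℝ f x - L‖ₑ ∂ν +
    ENNReal.ofReal (4 / R) * ⨍⁻ x in ball c R, ‖f x‖ₑ ∂ν) with hM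
  refine opENorm_le_of_forall_norm_eq (half_pos hR) L fun a ha => ?_
  have enorm_a : ‖a‖ₑ = ENNReal.ofReal (R / 2) := by rw [← ofReal_norm, ha]
  have segment_mem : ∀ x ∈ ball c (R / 2), ∀ s ∈ Icc (0 : ℝ) 1, x + s • a ∈ ball c R := by
    intro x hx s hs
    have shift_le : dist (x + s • a) x ≤ R / 2 := by
      rw [dist_self_add_left, norm_smul, Real.norm_of_nonneg hs.1, ha]
      exact mul_le_of_le_one_left (by positivity) hs.2
    exact mem_ball.2 (by linarith [dist_triangle (x + s • a) x c, mem_ball.1 hx])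
  have two_eq : (2 : ℝ≥0∞) = ‖a‖ₑ * ENNReal.ofReal (4 / R) := by
    rw [enorm_a, ← ENNReal.ofReal_mul (by positivity), ← ENNReal.ofReal_ofNat]
    congr 1
    field_simp
    norm_num
  have half_ball : ∀ I : ℝ≥0∞, I / ν (ball c (R / 2)) =
      2 ^ Module.finrank ℝ V * (I / ν (ball c R)) := by
    intro I
    rw [div_measure_ball_eq ν (by positivity : 0 < R / 2) hR c c, div_div_cancel₀ hR.ne',
      ENNReal.ofReal_pow zero_le_two, ENNReal.ofReal_ofNat]
  calc ‖L a‖ₑ ≤ (‖a‖ₑ * ∫⁻ x in ball c R, ‖fderiv ℝ f x - L‖ₑ ∂ν +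
        2 * ∫⁻ x in ball c R, ‖f x‖ₑ ∂ν) / ν (ball c (R / 2)) :=
        (ENNReal.le_div_iff_mul_le (.inl (measure_ball_pos ν c (by positivity)).ne')
          (.inl measure_ball_lt_top.ne)).2
          (enorm_apply_mul_measure_le ν isOpen_ball hf measurableSet_ball segment_mem L)
    _ = M * ‖a‖ₑ := by
        rw [half_ball, ENNReal.add_div, mul_div_assoc, mul_div_assoc, ← setLAverage_eq,
          ← setLAverage_eq, hM, two_eq]
        ring

end DifferenceQuotient

section MorreyPoincare

variable {V F : Type*} [NormedAddCommGroup V] [NormedSpace ℝ V] [FiniteDimensional ℝ V]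
  [MeasurableSpace V] [BorelSpace V] [NormedAddCommGroup F] [NormedSpace ℝ F] (ν : Measure V)
  [ν.IsAddHaarMeasure] {p r μ R : ℝ} {c : V} {f : V → F}

theorem laverage_ball_enorm_sub_le_maximalFunction (hp : 1 < p) (hμ : 1 < μ)
    (hf : ContDiffOn ℝ 1 f (ball c R)) {y : V} (hy : y ∈ ball c R) :
    ⨍⁻ z in ball c R, ‖f z - f y‖ₑ ∂ν ≤
      2 ^ Module.finrank ℝ V * (ENNReal.ofReal (μ / (μ - 1)) *
        (maximalFunction ν ((ball c R).indicator fun x => ‖fderiv ℝ f x‖ₑ) y ^ (1 - 1 / μ) *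
          morreyNorm ν p μ (ball c R) (fun x => ‖fderiv ℝ f x‖ₑ) ^ (1 / μ))) :=
  (laverage_ball_enorm_sub_le ν hf hy).trans <| mul_le_mul_right
    (lintegral_Ioi_le_mul_of_le_of_le_rpow_neg hμ
      (fun _ ht => laverage_ball_le_maximalFunction ν _ y ht)
      fun _ ht => laverage_indicator_le_morreyNorm hp
        (measurable_indicator_enorm_fderiv_s12 isOpen_ball hf) ht hy) _

theorem exists_morreyNorm_laverage_enorm_sub_le (hμ : 1 < μ) (hp : 1 < p)
    (hr : (1 - 1 / μ) * r = p) :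
    ∃ C : ℝ≥0, ∀ {c : V} {R : ℝ} {f : V → F}, ContDiffOn ℝ 1 f (ball c R) →
      morreyNorm ν r (μ - 1) (ball c R) (fun y => ⨍⁻ z in ball c R, ‖f z - f y‖ₑ ∂ν) ≤
        C * morreyNorm ν p μ (ball c R) fun x => ‖fderiv ℝ f x‖ₑ := by
  obtain ⟨C, maximal⟩ := exists_morreyNorm_maximalFunction_le ν hp
  have θ_pos : 0 < 1 - 1 / μ := sub_pos.2 ((div_lt_one (by linarith)).2 hμ)
  have r_pos : 0 < r := pos_of_mul_pos_right (hr ▸ zero_lt_one.trans hp) θ_pos.le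
  refine ⟨2 ^ Module.finrank ℝ V * ((μ / (μ - 1)).toNNReal * C ^ (1 - 1 / μ)),
    fun {c R f} hf => ?_⟩
  set G := (ball c R).indicator fun x => ‖fderiv ℝ f x‖ₑ
  set K := morreyNorm ν p μ (ball c R) fun x => ‖fderiv ℝ f x‖ₑ
  set κ := 2 ^ Module.finrank ℝ V * (ENNReal.ofReal (μ / (μ - 1)) * K ^ (1 / μ)) with hκ
  have measurable_pow : Measurable fun y => maximalFunction ν G y ^ (1 - 1 / μ) :=
    (measurable_maximalFunction ν G).pow_const _
  calc morreyNorm ν r (μ - 1) (ball c R) (fun y => ⨍⁻ z in ball c R, ‖f z - f y‖ₑ ∂ν)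
      ≤ morreyNorm ν r (μ - 1) (ball c R) (fun y => κ * maximalFunction ν G y ^ (1 - 1 / μ)) := by
        refine morreyNorm_mono r_pos.le fun y hy =>
          (laverage_ball_enorm_sub_le_maximalFunction ν hp hμ hf hy).trans_eq ?_
        rw [hκ]
        ring
    _ = κ * morreyNorm ν r ((1 - 1 / μ) * μ) (ball c R)
          (fun y => maximalFunction ν G y ^ (1 - 1 / μ)) := by
        rw [morreyNorm_const_mul r_pos (measurable_pow.indicator measurableSet_ball), sub_mul,
          one_mul, one_div_mul_cancel (by linarith)]
    _ ≤ κ * (C * K) ^ (1 - 1 / μ) := by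
        gcongr
        refine (morreyNorm_rpow_le r_pos θ_pos).trans (ENNReal.rpow_le_rpow ?_ θ_pos.le)
        rw [hr]
        exact maximal (by linarith) (measurable_indicator_enorm_fderiv_s12 isOpen_ball hf)
    _ = 2 ^ Module.finrank ℝ V * (ENNReal.ofReal (μ / (μ - 1)) * C ^ (1 - 1 / μ)) *
          (K ^ (1 - 1 / μ) * K ^ (1 / μ)) := by
        rw [hκ, ENNReal.mul_rpow_of_nonneg _ _ θ_pos.le]
        ring
    _ = _ := by
        rw [← ENNReal.rpow_add_of_nonneg _ _ θ_pos.le (by positivity), sub_add_cancel,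
          ENNReal.rpow_one]
        push_cast
        rw [ENNReal.coe_rpow_of_nonneg _ θ_pos.le]
        rfl

theorem exists_morreyNorm_le_of_le_mul_laverage_enorm_sub_add (hμ : 1 < μ) (hp : 1 < p)
    (hμp : μ * p ≤ Module.finrank ℝ V) (hr : (1 - 1 / μ) * r = p) :
    ∃ C : ℝ≥0, ∀ {c : V} {R : ℝ}, 0 < R → ∀ {f : V → F}, ContDiffOn ℝ 1 f (ball c R) →
      ∀ {h g : V → ℝ≥0∞} {κ τ : ℝ≥0∞}, Measurable ((ball c R).indicator g) →
        (∀ y ∈ ball c R,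
          h y ≤ κ * ⨍⁻ z in ball c R, ‖f z - f y‖ₑ ∂ν + τ * ⨍⁻ z in ball c R, g z ∂ν) →
        morreyNorm ν r (μ - 1) (ball c R) h ≤
          κ * (C * morreyNorm ν p μ (ball c R) fun x => ‖fderiv ℝ f x‖ₑ) +
            τ * (ENNReal.ofReal R⁻¹ * morreyNorm ν p μ (ball c R) g) := by
  obtain ⟨C, oscillation⟩ := exists_morreyNorm_laverage_enorm_sub_le (F := F) ν hμ hp hr
  have inv_mem : 1 / μ ∈ Ioo 0 1 := ⟨by positivity, (div_lt_one (by linarith)).2 hμ⟩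
  have le_r : p ≤ r := by nlinarith [inv_mem.1, inv_mem.2]
  have dimension : (μ - 1) * r ≤ Module.finrank ℝ V := by
    convert hμp using 1
    rw [← hr, ← mul_assoc, mul_sub, mul_one, mul_one_div_cancel (by linarith)]
  refine ⟨C, fun {c R} hR {f} hf {h g κ τ} hg hle => ?_⟩
  have scale : ENNReal.ofReal (R ^ (-μ)) * ENNReal.ofReal (R ^ (μ - 1)) = ENNReal.ofReal R⁻¹ := by
    rw [← ENNReal.ofReal_mul (by positivity), ← Real.rpow_add hR, ← Real.rpow_neg_one]
    ring_nf
  calc morreyNorm ν r (μ - 1) (ball c R) h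
      ≤ κ * morreyNorm ν r (μ - 1) (ball c R) (fun y => ⨍⁻ z in ball c R, ‖f z - f y‖ₑ ∂ν) +
          τ * (⨍⁻ z in ball c R, g z ∂ν) * ENNReal.ofReal (R ^ (μ - 1)) :=
        morreyNorm_le_of_le_mul_add ν (by linarith) (by linarith) dimension hR
          (measurable_indicator_laverage_enorm_sub ν measurableSet_ball hf.continuousOn) hle
    _ ≤ κ * (C * morreyNorm ν p μ (ball c R) fun x => ‖fderiv ℝ f x‖ₑ) +
          τ * (ENNReal.ofReal (R ^ (-μ)) * morreyNorm ν p μ (ball c R) g) *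
            ENNReal.ofReal (R ^ (μ - 1)) := by
        gcongr
        · exact oscillation hf
        · exact laverage_ball_le_morreyNorm hp hg hR
    _ = _ := by
        rw [← scale]
        ring

theorem exists_morreyNorm_enorm_le (hμ : 1 < μ) (hp : 1 < p)
    (hμp : μ * p ≤ Module.finrank ℝ V) (hr : (1 - 1 / μ) * r = p) :
    ∃ C : ℝ≥0, ∀ {c : V} {R : ℝ}, 0 < R → ∀ {f : V → F}, ContDiffOn ℝ 1 f (ball c R) →
      morreyNorm ν r (μ - 1) (ball c R) (fun x => ‖f x‖ₑ) ≤
        C * (morreyNorm ν p μ (ball c R) (fun x => ‖fderiv ℝ f x‖ₑ) +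
          ENNReal.ofReal R⁻¹ * morreyNorm ν p μ (ball c R) fun x => ‖f x‖ₑ) := by
  obtain ⟨C, bound⟩ :=
    exists_morreyNorm_le_of_le_mul_laverage_enorm_sub_add (F := F) ν hμ hp hμp hr
  refine ⟨C + 1, fun {c R} hR {f} hf => ?_⟩
  have measurable_f : Measurable ((ball c R).indicator fun x => ‖f x‖ₑ) :=
    measurable_indicator_of_continuousOn measurableSet_ball hf.continuousOn.enorm
  calc morreyNorm ν r (μ - 1) (ball c R) (fun x => ‖f x‖ₑ)
      ≤ 1 * (C * morreyNorm ν p μ (ball c R) fun x => ‖fderiv ℝ f x‖ₑ) +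
          1 * (ENNReal.ofReal R⁻¹ * morreyNorm ν p μ (ball c R) fun x => ‖f x‖ₑ) :=
        bound hR hf measurable_f fun y _ => by
          simpa using enorm_le_laverage_ball_enorm_sub_add ν hR hf.continuousOn y
    _ ≤ _ := by
        rw [one_mul, mul_add]
        gcongr <;> simp

theorem exists_morreyNorm_enorm_fderiv_le (hμ : 1 < μ) (hp : 1 < p)
    (hμp : μ * p ≤ Module.finrank ℝ V) (hr : (1 - 1 / μ) * r = p) :
    ∃ C : ℝ≥0, ∀ {c : V} {R : ℝ}, 0 < R → ∀ {u : V → F}, ContDiffOn ℝ 2 u (ball c R) →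
      morreyNorm ν r (μ - 1) (ball c R) (fun x => ‖fderiv ℝ u x‖ₑ) ≤
        C * (morreyNorm ν p μ (ball c R) (fun x => ‖fderiv ℝ (fderiv ℝ u) x‖ₑ) +
          ENNReal.ofReal (R ^ (-2 : ℝ)) * morreyNorm ν p μ (ball c R) fun x => ‖u x‖ₑ) := by
  obtain ⟨C, bound⟩ :=
    exists_morreyNorm_le_of_le_mul_laverage_enorm_sub_add (F := V →L[ℝ] F) ν hμ hp hμp hr
  refine ⟨2 ^ Module.finrank ℝ V * (C + 4), fun {c R} hR {u} hu => ?_⟩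
  have measurable_u : Measurable ((ball c R).indicator fun x => ‖u x‖ₑ) :=
    measurable_indicator_of_continuousOn measurableSet_ball hu.continuousOn.enorm
  have scale : ENNReal.ofReal (4 / R) * ENNReal.ofReal R⁻¹ = 4 * ENNReal.ofReal (R ^ (-2 : ℝ)) := by
    rw [← ENNReal.ofReal_ofNat 4, ← ENNReal.ofReal_mul (by positivity),
      ← ENNReal.ofReal_mul (by positivity), Real.rpow_neg hR.le, Real.rpow_ofNat]
    congr 1
    field_simp
  set K₂ := morreyNorm ν p μ (ball c R) fun x => ‖fderiv ℝ (fderiv ℝ u) x‖ₑ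
  set K₀ := morreyNorm ν p μ (ball c R) fun x => ‖u x‖ₑ
  calc morreyNorm ν r (μ - 1) (ball c R) (fun x => ‖fderiv ℝ u x‖ₑ)
      ≤ 2 ^ Module.finrank ℝ V * (C * K₂) +
          2 ^ Module.finrank ℝ V * ENNReal.ofReal (4 / R) * (ENNReal.ofReal R⁻¹ * K₀) :=
        bound hR (hu.fderiv_of_isOpen isOpen_ball (by norm_num)) measurable_u fun y _ => by
          rw [mul_assoc, ← mul_add]
          exact enorm_continuousLinearMap_le ν hR (hu.of_le one_le_two) (fderiv ℝ u y)
    _ = 2 ^ Module.finrank ℝ V * (C * K₂ + 4 * (ENNReal.ofReal (R ^ (-2 : ℝ)) * K₀)) := by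
        rw [mul_assoc _ (ENNReal.ofReal (4 / R)), ← mul_assoc (ENNReal.ofReal (4 / R)), scale]
        ring
    _ ≤ _ := by
        push_cast
        rw [mul_assoc, mul_add ((C : ℝ≥0∞) + 4)]
        gcongr <;> simp

end MorreyPoincare

section Drift

variable {V F : Type*} [NormedAddCommGroup V] [NormedSpace ℝ V] [FiniteDimensional ℝ V]
  [MeasurableSpace V] [BorelSpace V] [NormedAddCommGroup F] [NormedSpace ℝ F]

theorem stmt_12_general (ν : Measure V) [ν.IsAddHaarMeasure] {p q : ℝ} (hp : 1 < p) (hpq : p < q)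
    (hq : q ≤ Module.finrank ℝ V) :
    ∃ N : ℝ, 0 < N ∧ ∀ {c : V} {R : ℝ}, 0 < R →
      ∀ {b : V → ℝ≥0∞}, Measurable ((ball c R).indicator b) →
        ∀ {u : V → F}, ContDiffOn ℝ 2 u (ball c R) →
          morreyNorm ν p (q / p) (ball c R) (fun x => b x * ‖fderiv ℝ u x‖ₑ) ≤
              ENNReal.ofReal N * morreyNorm ν q 1 (ball c R) b *
                (morreyNorm ν p (q / p) (ball c R) (fun x => ‖fderiv ℝ (fderiv ℝ u) x‖ₑ) +
                  ENNReal.ofReal R⁻¹ *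
                    morreyNorm ν p (q / p) (ball c R) fun x => ‖fderiv ℝ u x‖ₑ) ∧
            morreyNorm ν p (q / p) (ball c R) (fun x => b x * ‖fderiv ℝ u x‖ₑ) ≤
              ENNReal.ofReal N * morreyNorm ν q 1 (ball c R) b *
                (morreyNorm ν p (q / p) (ball c R) (fun x => ‖fderiv ℝ (fderiv ℝ u) x‖ₑ) +
                  ENNReal.ofReal (R ^ (-2 : ℝ)) *
                    morreyNorm ν p (q / p) (ball c R) fun x => ‖u x‖ₑ) := by
  have hμ : 1 < q / p := (one_lt_div (by linarith)).2 hpq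
  have hμp : q / p * p ≤ Module.finrank ℝ V := by rwa [div_mul_cancel₀ _ (by linarith)]
  have p_ne_zero : p ≠ 0 := by linarith
  have q_ne_zero : q ≠ 0 := by linarith
  have gap_ne_zero : q - p ≠ 0 := by linarith
  have hr : (1 - 1 / (q / p)) * (p * q / (q - p)) = p := by field_simp
  obtain ⟨C₁, bound₁⟩ := exists_morreyNorm_enorm_le (F := V →L[ℝ] F) ν hμ hp hμp hr
  obtain ⟨C₂, bound₂⟩ := exists_morreyNorm_enorm_fderiv_le (F := F) ν hμ hp hμp hr
  refine ⟨(C₁ + C₂ + 1 : ℝ≥0), by positivity, fun {c R} hR {b} hb {u} hu => ?_⟩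
  have hDu : ContDiffOn ℝ 1 (fderiv ℝ u) (ball c R) :=
    hu.fderiv_of_isOpen isOpen_ball (by norm_num)
  have hölder := morreyNorm_mul_le (ν := ν) (μ₁ := 1) (μ₂ := q / p - 1) (r := p * q / (q - p))
    (by linarith) hpq (by field_simp; ring) hb
    (measurable_indicator_enorm_fderiv_s12 isOpen_ball (hu.of_le one_le_two))
  rw [add_sub_cancel] at hölder
  have hC₁ : (C₁ : ℝ≥0∞) ≤ (C₁ + C₂ + 1 : ℝ≥0) := by
    exact_mod_cast (le_self_add.trans (add_assoc C₁ C₂ 1).ge)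
  have hC₂ : (C₂ : ℝ≥0∞) ≤ (C₁ + C₂ + 1 : ℝ≥0) := by
    exact_mod_cast (le_add_self.trans le_self_add)
  rw [ENNReal.ofReal_coe_nnreal, mul_comm (_ : ℝ≥0∞) (morreyNorm ν q 1 _ b), mul_assoc, mul_assoc]
  exact ⟨hölder.trans (mul_le_mul_right ((bound₁ hR hDu).trans (mul_le_mul_left hC₁ _)) _),
    hölder.trans (mul_le_mul_right ((bound₂ hR hu).trans (mul_le_mul_left hC₂ _)) _)⟩

end Drift

section Euclidean

variable {d : ℕ}

theorem morrey_eq_morreyNorm {p : ℝ} (hp : 0 < p) (μ : ℝ) (Ω : Set (E d)) (g : E d → ℝ) :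
    morrey p μ Ω g = morreyNorm volume p μ Ω fun x => ‖g x‖ₑ := by
  have ofReal_abs_rpow : ∀ y, ENNReal.ofReal (|Ω.indicator g y| ^ p) =
      Ω.indicator (fun x => ‖g x‖ₑ) y ^ p := by
    intro y
    rw [← ENNReal.ofReal_rpow_of_nonneg (abs_nonneg _) hp.le, ← Real.enorm_eq_ofReal_abs,
      enorm_indicator_eq_indicator_enorm]
  simp only [morrey, nLp, morreyNorm, setLAverage_eq, ENNReal.div_eq_inv_mul, ofReal_abs_rpow]

theorem hess_apply {u : E d → ℝ} {x : E d} (hu : DifferentiableAt ℝ (fderiv ℝ u) x)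
    (i j : Fin d) :
    hess u x i j =
      fderiv ℝ (fderiv ℝ u) x (EuclideanSpace.single i 1) (EuclideanSpace.single j 1) := by
  simp [hess, fderiv_clm_apply hu (differentiableAt_const _)]

theorem norm_le_frob (D : E d →L[ℝ] E d →L[ℝ] ℝ) :
    ‖D‖ ≤ frob (.of fun i j => D (EuclideanSpace.single i 1) (EuclideanSpace.single j 1)) := by
  set m := fun i j => D (EuclideanSpace.single i 1) (EuclideanSpace.single j 1)
  refine D.opNorm_le_bound₂ (Real.sqrt_nonneg _) fun v w => ?_
  have expansion : D v w = ∑ ij : Fin d × Fin d, v ij.1 * w ij.2 * m ij.1 ij.2 := by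
    have basis_sum (v : E d) : v = ∑ i, v i • EuclideanSpace.single i (1 : ℝ) := by
      simpa using ((EuclideanSpace.basisFun (Fin d) ℝ).sum_repr v).symm
    conv_lhs => rw [basis_sum v, basis_sum w]
    simp only [map_sum, map_smul, sum_apply, smul_apply, smul_eq_mul, Finset.mul_sum,
      Fintype.sum_prod_type, mul_assoc]
    rw [Finset.sum_comm]
    exact Finset.sum_congr rfl fun i _ => Finset.sum_congr rfl fun j _ => mul_left_comm _ _ _
  have cauchy_schwarz := Finset.sum_mul_sq_le_sq_mul_sq (Finset.univ : Finset (Fin d × Fin d))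
    (fun ij => v ij.1 * w ij.2) fun ij => m ij.1 ij.2
  simp only [mul_pow, Fintype.sum_prod_type, ← Finset.sum_mul_sum] at cauchy_schwarz
  rw [expansion, Real.norm_eq_abs, frob, EuclideanSpace.norm_eq, EuclideanSpace.norm_eq,
    ← Real.sqrt_mul (by positivity), ← Real.sqrt_mul (by positivity)]
  refine Real.abs_le_sqrt ?_
  simp only [Real.norm_eq_abs, sq_abs, Matrix.of_apply]
  rw [Fintype.sum_prod_type]
  linarith

theorem enorm_fderiv_fderiv_le_enorm_frob_hess {u : E d → ℝ} {x : E d}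
    (hu : DifferentiableAt ℝ (fderiv ℝ u) x) :
    ‖fderiv ℝ (fderiv ℝ u) x‖ₑ ≤ ‖frob (hess u x)‖ₑ := by
  have hess_eq : hess u x = .of fun i j =>
      fderiv ℝ (fderiv ℝ u) x (EuclideanSpace.single i 1) (EuclideanSpace.single j 1) :=
    Matrix.ext (hess_apply hu)
  rw [hess_eq, enorm_le_iff_norm_le]
  exact (norm_le_frob _).trans (le_abs_self _)

end Euclidean

/-- Corollary 4.8 of the paper: Morrey bound on the drift term `b |Du|`. -/
theorem stmt_12 (d : ℕ) (hd : 1 ≤ d) (p q : ℝ)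
    (hp : 1 < p) (hpq : p < q) (hqd : q < d) :
    ∃ N : ℝ, 0 < N ∧
      ∀ R : ℝ, 0 < R →
        ∀ b : E d → ℝ, Measurable b → (∀ x, 0 ≤ b x) →
          morrey q 1 (ball (0 : E d) R) b < ⊤ →
          ∀ u : E d → ℝ, ContDiffOn ℝ 2 u (closedBall (0 : E d) R) →
            morrey p (q / p) (ball (0 : E d) R) (fun x => b x * ‖fderiv ℝ u x‖) ≤
                ENNReal.ofReal N * morrey q 1 (ball (0 : E d) R) b *
                  (morrey p (q / p) (ball (0 : E d) R) (fun x => frob (hess u x)) +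
                    ENNReal.ofReal R⁻¹ *
                      morrey p (q / p) (ball (0 : E d) R) (fun x => ‖fderiv ℝ u x‖)) ∧
              morrey p (q / p) (ball (0 : E d) R) (fun x => b x * ‖fderiv ℝ u x‖) ≤
                ENNReal.ofReal N * morrey q 1 (ball (0 : E d) R) b *
                  (morrey p (q / p) (ball (0 : E d) R) (fun x => frob (hess u x)) +
                    ENNReal.ofReal (R ^ (-2 : ℝ)) *
                      morrey p (q / p) (ball (0 : E d) R) u) := by
  obtain ⟨N, N_pos, drift⟩ := stmt_12_general (F := ℝ) (volume : Measure (E d)) hp hpq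
    (by simpa using hqd.le)
  have hp₀ : 0 < p := by linarith
  refine ⟨N, N_pos, fun R hR b hb _ _ u hu => ?_⟩
  have hu' : ContDiffOn ℝ 2 u (ball 0 R) := hu.mono ball_subset_closedBall
  have hess_le : morreyNorm volume p (q / p) (ball 0 R) (fun x => ‖fderiv ℝ (fderiv ℝ u) x‖ₑ) ≤
      morrey p (q / p) (ball 0 R) fun x => frob (hess u x) := by
    rw [morrey_eq_morreyNorm hp₀]
    refine morreyNorm_mono hp₀.le fun x hx => enorm_fderiv_fderiv_le_enorm_frob_hess ?_
    exact ((hu'.fderiv_of_isOpen isOpen_ball (by norm_num)).contDiffAt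
      (isOpen_ball.mem_nhds hx)).differentiableAt one_ne_zero
  obtain ⟨first, second⟩ := drift hR (hb.enorm.indicator measurableSet_ball) hu'
  simp only [morrey_eq_morreyNorm (hp₀.trans hpq), morrey_eq_morreyNorm hp₀, enorm_mul,
    enorm_norm] at hess_le ⊢
  constructor
  · exact first.trans (by gcongr)
  · exact second.trans (by gcongr)
end
end
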